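/- arXiv:math/0012230 — 2 statements merged into one kernel-verified Lean document; each statement's English description precedes it below -/
import Mathlib

section
/- As n → ∞, the total number a(n) of n-step walks on the slit plane satisfies a(n) ∼ (√(1+√2) / (2·Γ(3/4))) · 4ⁿ · n^{−1/4}, i.e. the ratio of a(n) to this expression tends to 1. -/
open Filter PowerSeries

/-- The forbidden half-line `H = {(k,0) : k ≤ 0}`. -/
def slitH : Set (ℤ × ℤ) := {p : ℤ × ℤ | p.2 = 0 ∧ p.1 ≤ 0}

/-- The four steps of the ordinary square lattice. -/
def sqSteps : Set (ℤ × ℤ) := {(1,0), (-1,0), (0,1), (0,-1)}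

/-- `w : Fin (n+1) → ℤ × ℤ` is a walk on the slit plane with steps in `A`. -/
def IsSlitWalk (A : Set (ℤ × ℤ)) (n : ℕ) (w : Fin (n+1) → ℤ × ℤ) : Prop :=
  w 0 = (0,0) ∧ (∀ m : Fin n, w m.succ - w m.castSucc ∈ A) ∧
    ∀ m : Fin (n+1), 1 ≤ (m : ℕ) → w m ∉ slitH

/-- `a(n)`: the total number of walks on the slit plane of length `n`. -/
noncomputable def slitTotal (A : Set (ℤ × ℤ)) (n : ℕ) : ℕ :=
  Nat.card {w : Fin (n+1) → ℤ × ℤ // IsSlitWalk A n w}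

/-!
Weight a walk by `t ^ length * x ^ abscissa`, and let `Y` be the power series root of
`t (1 + Y²) = Y (1 - (x + 1/x) t)`. The walks ending at height `j` have generating function
`F Y ^ |j|`, where `F` counts those ending on the axis, and the walk equation becomes
`F(x) √Δ(x) = B(1/x)` with `Δ = (1 - (x + 1/x) t)² - 4t²`. Here `F` has only nonnegative powers of
`x` and the boundary term `B`, which lives on the slit, only nonpositive ones. The Wiener-Hopf
factorization `√Δ(x) = A(x) A(1/x)` is explicit, so `F(x) = A(0) / A(x)` and `B(1/x) = A(0) A(1/x)`.
At `x = 1`, the generating function of all walks is `S(t) = A(0) A(1) / (1 - 4t)`, that is,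
`S(t) = (1 - 4t)^(-3/4) √((1 + √(1 - 4t)) / 2) √((1 + √(1 + 4t)) / 2)`.
The coefficients of the last two factors are summable at `t = 1/4` even against a weight
`n ^ (1/4)`, so only the values of these factors at `t = 1/4` enter the asymptotics
`n ^ (-1/4) / Γ(3/4)` of the coefficients of `(1 - t)^(-3/4)`.
-/

section FormalSquareRoot

variable {R S : Type*} [CommRing R] [CommRing S]

theorem eq_of_sq_eq_sq_of_constantCoeff_eq_one (h2 : IsUnit (2 : R)) {f g : R⟦X⟧}
    (h : f ^ 2 = g ^ 2) (hf : constantCoeff f = 1) (hg : constantCoeff g = 1) : f = g := by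
  have hunit : IsUnit (f + g) := by
    rw [PowerSeries.isUnit_iff_constantCoeff, map_add, hf, hg, one_add_one_eq_two]
    exact h2
  refine sub_eq_zero.mp (hunit.mul_right_eq_zero.mp ?_)
  linear_combination h

theorem binomialSeries_sq [BinomialRing R] [Algebra R S] (r : R) :
    binomialSeries S r ^ 2 = binomialSeries S (2 * r) := by
  rw [sq, ← binomialSeries_add, two_mul]

theorem binomialSeries_one [BinomialRing R] [Algebra R S] :
    binomialSeries S (1 : R) = 1 + X := by
  simpa using binomialSeries_nat (R := R) (A := S) 1

theorem constantCoeff_map (φ : R →+* S) (f : R⟦X⟧) :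
    constantCoeff (PowerSeries.map φ f) = φ (constantCoeff f) := by
  simp only [← coeff_zero_eq_constantCoeff_apply, PowerSeries.coeff_map]

theorem constantCoeff_rescale (a : R) (f : R⟦X⟧) :
    constantCoeff (rescale a f) = constantCoeff f := by
  rw [← coeff_zero_eq_constantCoeff_apply, coeff_rescale, pow_zero, one_mul,
    coeff_zero_eq_constantCoeff_apply]

variable [Algebra ℚ R] [Algebra ℚ S]

theorem isUnit_ofNat_of_ratAlgebra (n : ℕ) [n.AtLeastTwo] : IsUnit (OfNat.ofNat n : R) :=
  map_ofNat (algebraMap ℚ R) n ▸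
    (IsUnit.mk0 (OfNat.ofNat n : ℚ) (OfNat.ofNat_ne_zero n)).map (algebraMap ℚ R)

/-- The square root with constant coefficient `1` of a power series with constant coefficient `1`,
obtained by substituting `f - 1` into the binomial series of `(1 + X) ^ (1 / 2)`. -/
noncomputable def sqrtSeries (f : R⟦X⟧) : R⟦X⟧ :=
  (binomialSeries R (1 / 2 : ℚ)).subst (f - 1)

theorem sqrtSeries_sq {f : R⟦X⟧} (hf : constantCoeff f = 1) : sqrtSeries f ^ 2 = f := by
  have hs : HasSubst (f - 1) := HasSubst.of_constantCoeff_zero' (by simp [hf])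
  rw [sqrtSeries, ← subst_pow hs, binomialSeries_sq, mul_one_div_cancel two_ne_zero,
    binomialSeries_one, subst_add hs, subst_X hs, ← coe_substAlgHom hs, map_one,
    add_sub_cancel]

theorem constantCoeff_sqrtSeries {f : R⟦X⟧} (hf : constantCoeff f = 1) :
    constantCoeff (sqrtSeries f) = 1 := by
  have hf' : constantCoeff (f - 1) = 0 := by simp [hf]
  have hs : HasSubst (f - 1) := HasSubst.of_constantCoeff_zero' hf'
  have h := constantCoeff_subst_eq_zero (R := R) hf' (binomialSeries R (1 / 2 : ℚ) - 1) (by simp)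
  rw [subst_sub hs, ← coe_substAlgHom hs, map_one, map_sub, map_one, coe_substAlgHom] at h
  exact sub_eq_zero.mp h

theorem eq_sqrtSeries {f g : R⟦X⟧} (h : g ^ 2 = f) (hg : constantCoeff g = 1) :
    g = sqrtSeries f := by
  have hf : constantCoeff f = 1 := by rw [← h, map_pow, hg, one_pow]
  exact eq_of_sq_eq_sq_of_constantCoeff_eq_one (isUnit_ofNat_of_ratAlgebra 2)
    (h.trans (sqrtSeries_sq hf).symm) hg (constantCoeff_sqrtSeries hf)

theorem map_sqrtSeries (φ : R →+* S) {f : R⟦X⟧} (hf : constantCoeff f = 1) :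
    PowerSeries.map φ (sqrtSeries f) = sqrtSeries (PowerSeries.map φ f) :=
  eq_sqrtSeries (by rw [← map_pow, sqrtSeries_sq hf])
    (by rw [constantCoeff_map, constantCoeff_sqrtSeries hf, map_one])

theorem rescale_sqrtSeries (a : R) {f : R⟦X⟧} (hf : constantCoeff f = 1) :
    rescale a (sqrtSeries f) = sqrtSeries (rescale a f) :=
  eq_sqrtSeries (by rw [← map_pow, sqrtSeries_sq hf])
    (by rw [constantCoeff_rescale, constantCoeff_sqrtSeries hf])

end FormalSquareRoot

section KernelFactorization

variable {R S : Type*} [CommRing R] [Algebra ℚ R] [CommRing S] [Algebra ℚ S]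

/-- The square of the canonical factor of the kernel, as a series in the length variable whose
coefficients depend on the horizontal variable `z`. -/
noncomputable def kernelRadicand (z : R) : R⟦X⟧ :=
  (1 / 4 : ℚ) •
    ((1 + sqrtSeries (1 - 4 * X) - (1 - sqrtSeries (1 - 4 * X)) * C z) *
      (1 + sqrtSeries (1 + 4 * X) + (1 - sqrtSeries (1 + 4 * X)) * C z))

/-- The canonical (Wiener-Hopf) factor of the kernel: `kernelFactor x` and `kernelFactor x⁻¹` are
its factors with nonnegative and nonpositive powers of `x`. -/
noncomputable def kernelFactor (z : R) : R⟦X⟧ :=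
  sqrtSeries (kernelRadicand z)

/-- The square root of the discriminant of the kernel equation `X * (1 + Y ^ 2) = Y * (1 - c * X)`
in the vertical variable `Y`, where `c` is the weight of the horizontal steps. -/
noncomputable def kernelSqrt (c : R) : R⟦X⟧ :=
  sqrtSeries ((1 - C c * X) ^ 2 - 4 * X ^ 2)

/-- The root of the kernel equation `X * (1 + Y ^ 2) = Y * (1 - c * X)`, multiplied by `X`, that has
constant coefficient `1`. -/
noncomputable def kernelLargeRoot (c : R) : R⟦X⟧ :=
  (1 / 2 : ℚ) • (1 - C c * X + kernelSqrt c)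

/-- The root without constant term of the kernel equation `X * (1 + Y ^ 2) = Y * (1 - c * X)`;
the product of its two roots is `1`. -/
noncomputable def kernelRoot (c : R) : R⟦X⟧ :=
  X * invOfUnit (kernelLargeRoot c) 1

theorem constantCoeff_kernelRadicand (z : R) : constantCoeff (kernelRadicand z) = 1 := by
  have hu : constantCoeff (sqrtSeries (1 - 4 * X : R⟦X⟧)) = 1 :=
    constantCoeff_sqrtSeries (by simp)
  have hv : constantCoeff (sqrtSeries (1 + 4 * X : R⟦X⟧)) = 1 :=
    constantCoeff_sqrtSeries (by simp)
  rw [kernelRadicand, map_rat_smul]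
  simp only [map_mul, map_add, map_sub, map_one, hu, hv, sub_self, zero_mul, sub_zero, add_zero]
  rw [one_add_one_eq_two, ← map_ofNat (algebraMap ℚ R) 2, ← map_mul, Algebra.smul_def, ← map_mul]
  norm_num

theorem constantCoeff_kernelFactor (z : R) : constantCoeff (kernelFactor z) = 1 :=
  constantCoeff_sqrtSeries (constantCoeff_kernelRadicand z)

theorem four_mul_kernelFactor_sq (z : R) : 4 * kernelFactor z ^ 2 =
    (1 + sqrtSeries (1 - 4 * X) - (1 - sqrtSeries (1 - 4 * X)) * C z) *
      (1 + sqrtSeries (1 + 4 * X) + (1 - sqrtSeries (1 + 4 * X)) * C z) := by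
  rw [kernelFactor, sqrtSeries_sq (constantCoeff_kernelRadicand z), kernelRadicand,
    ← map_ofNat (algebraMap ℚ R⟦X⟧) 4, ← Algebra.smul_def, smul_smul]
  norm_num

theorem map_kernelFactor (φ : R →+* S) (z : R) :
    PowerSeries.map φ (kernelFactor z) = kernelFactor (φ z) := by
  rw [kernelFactor, map_sqrtSeries φ (constantCoeff_kernelRadicand z), kernelFactor,
    kernelRadicand, map_rat_smul, kernelRadicand]
  simp [map_sqrtSeries, PowerSeries.map_C, map_ofNat]

theorem constantCoeff_kernelSqrt (c : R) : constantCoeff (kernelSqrt c) = 1 :=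
  constantCoeff_sqrtSeries (by simp)

theorem kernelSqrt_sq (c : R) : kernelSqrt c ^ 2 = (1 - C c * X) ^ 2 - 4 * X ^ 2 :=
  sqrtSeries_sq (by simp)

theorem kernelFactor_mul_kernelFactor {x y : R} (hxy : x * y = 1) :
    kernelFactor x * kernelFactor y = kernelSqrt (x + y) := by
  refine eq_sqrtSeries ?_ (by simp [constantCoeff_kernelFactor])
  have hx := four_mul_kernelFactor_sq x
  have hy := four_mul_kernelFactor_sq y
  have hu : sqrtSeries (1 - 4 * X : R⟦X⟧) ^ 2 = 1 - 4 * X := sqrtSeries_sq (by simp)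
  have hv : sqrtSeries (1 + 4 * X : R⟦X⟧) ^ 2 = 1 + 4 * X := sqrtSeries_sq (by simp)
  have hC : C x * C y = (1 : R⟦X⟧) := by rw [← map_mul, hxy, map_one]
  set u : R⟦X⟧ := sqrtSeries (1 - 4 * X)
  set v : R⟦X⟧ := sqrtSeries (1 + 4 * X)
  have hminus : (1 + u - (1 - u) * C x) * (1 + u - (1 - u) * C y) =
      4 * (1 - 2 * X - (C x + C y) * X) := by
    linear_combination (1 - u) ^ 2 * hC + (2 + C x + C y) * hu
  have hplus : (1 + v + (1 - v) * C x) * (1 + v + (1 - v) * C y) =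
      4 * (1 + 2 * X - (C x + C y) * X) := by
    linear_combination (1 - v) ^ 2 * hC + (2 - C x - C y) * hv
  refine (isUnit_ofNat_of_ratAlgebra 16).mul_left_cancel ?_
  calc 16 * (kernelFactor x * kernelFactor y) ^ 2
      = (4 * kernelFactor x ^ 2) * (4 * kernelFactor y ^ 2) := by ring
    _ = ((1 + u - (1 - u) * C x) * (1 + u - (1 - u) * C y)) *
        ((1 + v + (1 - v) * C x) * (1 + v + (1 - v) * C y)) := by rw [hx, hy]; ring
    _ = 16 * ((1 - C (x + y) * X) ^ 2 - 4 * X ^ 2) := by rw [hminus, hplus, map_add]; ring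

theorem kernelFactor_one_sq : kernelFactor (1 : R) ^ 2 = sqrtSeries (1 - 4 * X) := by
  refine (isUnit_ofNat_of_ratAlgebra 4).mul_left_cancel ?_
  rw [four_mul_kernelFactor_sq, map_one]
  ring

theorem two_mul_kernelLargeRoot (c : R) :
    2 * kernelLargeRoot c = 1 - C c * X + kernelSqrt c := by
  rw [kernelLargeRoot, ← map_ofNat (algebraMap ℚ R⟦X⟧) 2, ← Algebra.smul_def, smul_smul]
  norm_num

theorem constantCoeff_kernelLargeRoot (c : R) : constantCoeff (kernelLargeRoot c) = 1 := by
  refine (isUnit_ofNat_of_ratAlgebra 2).mul_left_cancel ?_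
  have h := congrArg constantCoeff (two_mul_kernelLargeRoot c)
  simpa [map_ofNat, constantCoeff_kernelSqrt, one_add_one_eq_two] using h

theorem isUnit_kernelLargeRoot (c : R) : IsUnit (kernelLargeRoot c) := by
  rw [PowerSeries.isUnit_iff_constantCoeff, constantCoeff_kernelLargeRoot]
  exact isUnit_one

theorem kernelLargeRoot_sq (c : R) :
    kernelLargeRoot c ^ 2 = (1 - C c * X) * kernelLargeRoot c - X ^ 2 := by
  refine (isUnit_ofNat_of_ratAlgebra 4).mul_left_cancel ?_
  linear_combination (2 * kernelLargeRoot c - (1 - C c * X) + kernelSqrt c) *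
    two_mul_kernelLargeRoot c + kernelSqrt_sq c

theorem constantCoeff_kernelRoot (c : R) : constantCoeff (kernelRoot c) = 0 := by
  simp [kernelRoot]

theorem kernelRoot_mul_kernelLargeRoot (c : R) : kernelRoot c * kernelLargeRoot c = X := by
  rw [kernelRoot, mul_assoc, invOfUnit_mul _ _ (by simp [constantCoeff_kernelLargeRoot]), mul_one]

theorem kernelRoot_mul_one_sub (c : R) :
    kernelRoot c * (1 - C c * X) = X * (1 + kernelRoot c ^ 2) := by
  refine ((isUnit_kernelLargeRoot c).pow 2).mul_left_cancel ?_
  linear_combination (kernelLargeRoot c * (1 - C c * X) -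
    X * (kernelRoot c * kernelLargeRoot c + X)) * kernelRoot_mul_kernelLargeRoot c -
    X * kernelLargeRoot_sq c

theorem one_sub_sub_two_mul_kernelRoot (c : R) :
    1 - C c * X - 2 * X * kernelRoot c = kernelSqrt c := by
  refine (isUnit_kernelLargeRoot c).mul_left_cancel ?_
  linear_combination kernelLargeRoot c * two_mul_kernelLargeRoot c -
    2 * X * kernelRoot_mul_kernelLargeRoot c - 2 * kernelLargeRoot_sq c

end KernelFactorization

section LaurentEvaluation

open scoped LaurentPolynomial Polynomial

variable {R : Type*} [CommRing R]

/-- The substitution `x = T ^ k` of a power of the Laurent variable into a polynomial. -/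
noncomputable def evalT (k : ℤ) : R[X] →+* R[T;T⁻¹] :=
  Polynomial.eval₂RingHom LaurentPolynomial.C (LaurentPolynomial.T k)

theorem evalT_C (k : ℤ) (a : R) : evalT k (Polynomial.C a) = LaurentPolynomial.C a :=
  Polynomial.eval₂_C _ _

theorem evalT_X (k : ℤ) : evalT k (Polynomial.X : R[X]) = LaurentPolynomial.T k :=
  Polynomial.eval₂_X _ _

theorem evalT_monomial (k : ℤ) (n : ℕ) (a : R) :
    evalT k (Polynomial.monomial n a) = AddMonoidAlgebra.single (n * k) a := by
  rw [← Polynomial.C_mul_X_pow_eq_monomial, map_mul, map_pow, evalT_C, evalT_X,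
    LaurentPolynomial.T_pow, LaurentPolynomial.single_eq_C_mul_T]

theorem coeff_T_mul (k i : ℤ) (f : R[T;T⁻¹]) :
    (LaurentPolynomial.T k * f).coeff i = f.coeff (i - k) := by
  rw [LaurentPolynomial.T, AddMonoidAlgebra.coeff_single_mul_apply, one_mul, neg_add_eq_sub]

theorem coeff_evalT_of_forall_ne {k i : ℤ} (h : ∀ n : ℕ, n * k ≠ i) (q : R[X]) :
    (evalT k q).coeff i = 0 := by
  induction q using Polynomial.induction_on' with
  | add p q hp hq => rw [map_add, AddMonoidAlgebra.coeff_add, Finsupp.add_apply, hp, hq, add_zero]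
  | monomial n a =>
    rw [evalT_monomial, AddMonoidAlgebra.coeff_single, Finsupp.single_eq_of_ne (h n).symm]

theorem coeff_evalT_mul {k : ℤ} (hk : k ≠ 0) (n : ℕ) (q : R[X]) :
    (evalT k q).coeff (n * k) = q.coeff n := by
  induction q using Polynomial.induction_on' with
  | add p q hp hq =>
    rw [map_add, AddMonoidAlgebra.coeff_add, Finsupp.add_apply, hp, hq, Polynomial.coeff_add]
  | monomial m a =>
    rw [evalT_monomial, AddMonoidAlgebra.coeff_single, Finsupp.single_apply,
      Polynomial.coeff_monomial]
    simp [hk]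

theorem hasSum_coeff_eval_one [TopologicalSpace R] (q : R[X]) : HasSum q.coeff (q.eval 1) := by
  rw [Polynomial.eval_eq_sum, Polynomial.sum]
  simp only [one_pow, mul_one]
  exact hasSum_sum_of_ne_finset_zero fun _ hn ↦ Polynomial.notMem_support_iff.mp hn

theorem hasSum_coeff_evalT [TopologicalSpace R] {k : ℤ} (hk : k ≠ 0) (q : R[X]) :
    HasSum (evalT k q).coeff (q.eval 1) := by
  have hinj : Function.Injective fun n : ℕ ↦ (n : ℤ) * k := fun m n h ↦ by simpa [hk] using h
  rw [← hinj.hasSum_iff fun i hi ↦ coeff_evalT_of_forall_ne (fun n hn ↦ hi ⟨n, hn⟩) q]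
  simpa only [Function.comp_def, coeff_evalT_mul hk] using hasSum_coeff_eval_one q

end LaurentEvaluation

section Rows

open scoped LaurentPolynomial Polynomial
open LaurentPolynomial (T)

variable (R : Type*) [CommRing R] [Algebra ℚ R]

/-- The generating function, in the variable `x` and the length variable, of the walks on the slit
plane that end on the horizontal axis. -/
noncomputable def slitAxis : R[X]⟦X⟧ :=
  PowerSeries.map Polynomial.C (kernelFactor 0) * invOfUnit (kernelFactor Polynomial.X) 1

/-- The generating function, in the variable `x⁻¹`, of the defect of the walk equation on the slit:
the initial `1` minus the extensions of walks by a step onto the slit. -/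
noncomputable def slitBoundary : R[X]⟦X⟧ :=
  PowerSeries.map Polynomial.C (kernelFactor 0) * kernelFactor Polynomial.X

/-- The generating function of the walks on the slit plane that end at height `j`. -/
noncomputable def slitRow (j : ℤ) : R[T;T⁻¹]⟦X⟧ :=
  PowerSeries.map (evalT 1) (slitAxis R) * kernelRoot (T 1 + T (-1)) ^ j.natAbs

theorem slitAxis_mul_kernelFactor :
    slitAxis R * kernelFactor Polynomial.X = PowerSeries.map Polynomial.C (kernelFactor 0) := by
  rw [slitAxis, mul_assoc, invOfUnit_mul _ _ (by simp [constantCoeff_kernelFactor]), mul_one]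

theorem constantCoeff_slitAxis : constantCoeff (slitAxis R) = 1 := by
  simp [slitAxis, constantCoeff_map, constantCoeff_kernelFactor]

theorem map_C_kernelFactor {S : Type*} [CommRing S] [Algebra ℚ S] (φ : R[X] →+* S) (z : R) :
    PowerSeries.map φ (PowerSeries.map Polynomial.C (kernelFactor z)) =
      kernelFactor (φ (Polynomial.C z)) := by
  rw [map_kernelFactor, map_kernelFactor]

theorem map_eval_zero_slitAxis :
    PowerSeries.map (Polynomial.evalRingHom 0) (slitAxis R) = 1 := by
  have hunit : IsUnit (kernelFactor (0 : R)) := by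
    rw [PowerSeries.isUnit_iff_constantCoeff, constantCoeff_kernelFactor]
    exact isUnit_one
  refine hunit.mul_right_cancel ?_
  have h := congrArg (PowerSeries.map (Polynomial.evalRingHom (0 : R)))
    (slitAxis_mul_kernelFactor R)
  rw [map_mul, map_C_kernelFactor, map_kernelFactor] at h
  simpa using h

theorem map_eval_one_slitBoundary :
    PowerSeries.map (Polynomial.evalRingHom 1) (slitBoundary R) =
      kernelFactor 0 * kernelFactor 1 := by
  rw [slitBoundary, map_mul, map_C_kernelFactor, map_kernelFactor]
  simp

theorem slitAxis_mul_kernelSqrt :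
    PowerSeries.map (evalT 1) (slitAxis R) * kernelSqrt (T 1 + T (-1)) =
      PowerSeries.map (evalT (-1)) (slitBoundary R) := by
  have hT : (T 1 * T (-1) : R[T;T⁻¹]) = 1 := by rw [← LaurentPolynomial.T_add]; simp
  have h := congrArg (PowerSeries.map (evalT 1)) (slitAxis_mul_kernelFactor R)
  rw [map_mul, map_C_kernelFactor, map_kernelFactor, evalT_C, evalT_X] at h
  rw [← kernelFactor_mul_kernelFactor hT, ← mul_assoc, h, slitBoundary, map_mul,
    map_C_kernelFactor, map_kernelFactor, evalT_C, evalT_X]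

theorem slitRow_zero : slitRow R 0 = PowerSeries.map (evalT 1) (slitAxis R) := by
  simp [slitRow]

theorem constantCoeff_slitRow (j : ℤ) :
    constantCoeff (slitRow R j) = if j = 0 then 1 else 0 := by
  rw [slitRow, map_mul, constantCoeff_map, constantCoeff_slitAxis, map_one, one_mul, map_pow,
    constantCoeff_kernelRoot, zero_pow_eq]
  simp only [Int.natAbs_eq_zero]

theorem slitRow_neg (j : ℤ) : slitRow R (-j) = slitRow R j := by
  rw [slitRow, Int.natAbs_neg, slitRow]

theorem slitRow_natCast_add_one (k : ℕ) : slitRow R (k + 1) =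
    X * (C (T 1 + T (-1)) * slitRow R (k + 1) + slitRow R k + slitRow R (k + 2)) := by
  have hnat (m : ℕ) : slitRow R m =
      PowerSeries.map (evalT 1) (slitAxis R) * kernelRoot (T 1 + T (-1)) ^ m := rfl
  have h1 := hnat (k + 1)
  have h2 := hnat (k + 2)
  push_cast at h1 h2
  rw [h1, h2, hnat]
  linear_combination PowerSeries.map (evalT 1) (slitAxis R) * kernelRoot (T 1 + T (-1)) ^ k *
    kernelRoot_mul_one_sub (T 1 + T (-1) : R[T;T⁻¹])

theorem slitRow_eq (j : ℤ) : slitRow R j =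
    X * (C (T 1 + T (-1)) * slitRow R j + slitRow R (j - 1) + slitRow R (j + 1)) +
      if j = 0 then PowerSeries.map (evalT (-1)) (slitBoundary R) else 0 := by
  rcases lt_trichotomy j 0 with hj | rfl | hj
  · obtain ⟨k, rfl⟩ : ∃ k : ℕ, j = -(k + 1) := ⟨(-j - 1).toNat, by omega⟩
    rw [if_neg hj.ne, add_zero, show (-(k + 1) - 1 : ℤ) = -(k + 2) by ring,
      show (-(k + 1) + 1 : ℤ) = -k by ring]
    simp only [slitRow_neg]
    linear_combination slitRow_natCast_add_one R k
  · have h1 : slitRow R 1 = PowerSeries.map (evalT 1) (slitAxis R) * kernelRoot (T 1 + T (-1)) := by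
      simp [slitRow]
    rw [if_pos rfl, zero_sub, zero_add, slitRow_neg, h1, slitRow_zero, ← slitAxis_mul_kernelSqrt,
      ← one_sub_sub_two_mul_kernelRoot]
    ring
  · obtain ⟨k, rfl⟩ : ∃ k : ℕ, j = k + 1 := ⟨(j - 1).toNat, by omega⟩
    rw [if_neg hj.ne', add_zero, add_sub_cancel_right, add_assoc (k : ℤ), one_add_one_eq_two]
    exact slitRow_natCast_add_one R k

/-- The coefficient of `x ^ p.1` and of the `n`-th power of the length variable in the row at height
`p.2`; this is the number of walks on the slit plane of length `n` ending at `p`. -/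
noncomputable def slitCoeff (n : ℕ) (p : ℤ × ℤ) : R :=
  (coeff n (slitRow R p.2)).coeff p.1

/-- The coefficients of `slitBoundary`, supported on the slit. -/
noncomputable def slitDefect (n : ℕ) (p : ℤ × ℤ) : R :=
  if p.2 = 0 then (evalT (-1) (coeff n (slitBoundary R))).coeff p.1 else 0

theorem slitCoeff_zero (p : ℤ × ℤ) : slitCoeff R 0 p = if p = (0, 0) then 1 else 0 := by
  obtain ⟨i, j⟩ := p
  rw [slitCoeff, coeff_zero_eq_constantCoeff_apply, constantCoeff_slitRow]
  by_cases hj : j = 0 <;> simp [hj, ← LaurentPolynomial.T_zero, eq_comm]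

theorem slitCoeff_succ (n : ℕ) (i j : ℤ) : slitCoeff R (n + 1) (i, j) =
    slitCoeff R n (i - 1, j) + slitCoeff R n (i + 1, j) + slitCoeff R n (i, j - 1) +
      slitCoeff R n (i, j + 1) + slitDefect R (n + 1) (i, j) := by
  have h := congrArg (fun f ↦ (coeff (n + 1) f).coeff i) (slitRow_eq R j)
  simp only [map_add, coeff_succ_X_mul, add_mul, coeff_C_mul, AddMonoidAlgebra.coeff_add,
    Finsupp.add_apply, coeff_T_mul, sub_neg_eq_add] at h
  rw [slitCoeff, h, slitDefect]
  split_ifs <;> simp [slitCoeff]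

theorem slitCoeff_succ_of_mem (n : ℕ) {p : ℤ × ℤ} (hp : p ∈ slitH) : slitCoeff R (n + 1) p = 0 := by
  obtain ⟨i, j⟩ := p
  obtain ⟨rfl, hi⟩ : j = 0 ∧ i ≤ 0 := hp
  rw [slitCoeff, slitRow_zero, PowerSeries.coeff_map]
  rcases hi.lt_or_eq with hi | rfl
  · exact coeff_evalT_of_forall_ne (fun m ↦ by omega) _
  · have h := congrArg (coeff (n + 1)) (map_eval_zero_slitAxis R)
    rw [PowerSeries.coeff_map, coeff_one, if_neg n.succ_ne_zero, Polynomial.coe_evalRingHom,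
      ← Polynomial.coeff_zero_eq_eval_zero, ← coeff_evalT_mul one_ne_zero] at h
    simpa using h

theorem slitDefect_of_notMem (n : ℕ) {p : ℤ × ℤ} (hp : p ∉ slitH) : slitDefect R n p = 0 := by
  refine ite_eq_right_iff.mpr fun hj ↦ coeff_evalT_of_forall_ne (fun m hm ↦ hp ⟨hj, ?_⟩) _
  omega

theorem hasSum_slitDefect [TopologicalSpace R] (n : ℕ) :
    HasSum (slitDefect R n) (coeff n (kernelFactor (0 : R) * kernelFactor 1)) := by
  have hinj : Function.Injective fun i : ℤ ↦ (i, (0 : ℤ)) := Prod.mk_left_injective 0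
  rw [← hinj.hasSum_iff, ← map_eval_one_slitBoundary, PowerSeries.coeff_map]
  · simpa [Function.comp_def, slitDefect] using hasSum_coeff_evalT (by decide : (-1 : ℤ) ≠ 0) _
  · rintro ⟨i, j⟩ hp
    exact if_neg fun hj ↦ hp ⟨i, by rw [show j = 0 from hj]⟩

end Rows

section Counting

theorem isSlitWalk_zero (A : Set (ℤ × ℤ)) (w : Fin 1 → ℤ × ℤ) :
    IsSlitWalk A 0 w ↔ w = fun _ ↦ (0, 0) := by
  simp [IsSlitWalk, funext_iff, Fin.forall_fin_one]

theorem isSlitWalk_snoc (A : Set (ℤ × ℤ)) (n : ℕ) (w : Fin (n + 1) → ℤ × ℤ) (p : ℤ × ℤ) :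
    IsSlitWalk A (n + 1) (Fin.snoc (α := fun _ ↦ ℤ × ℤ) w p) ↔
      IsSlitWalk A n w ∧ p - w (Fin.last n) ∈ A ∧ p ∉ slitH := by
  rw [IsSlitWalk, IsSlitWalk, Fin.forall_fin_succ' (P := fun m : Fin (n + 1) ↦ _ ∈ A),
    Fin.forall_fin_succ' (P := fun m : Fin (n + 1 + 1) ↦ 1 ≤ (m : ℕ) → _), ← Fin.castSucc_zero]
  simp only [Fin.succ_castSucc, Fin.snoc_castSucc, Fin.succ_last, Fin.snoc_last, Fin.val_castSucc,
    Fin.val_last, Nat.le_add_left, true_imp_iff]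
  tauto

theorem isSlitWalk_succ (A : Set (ℤ × ℤ)) (n : ℕ) (w : Fin (n + 2) → ℤ × ℤ) :
    IsSlitWalk A (n + 1) w ↔ IsSlitWalk A n (Fin.init w) ∧
      w (Fin.last (n + 1)) - Fin.init w (Fin.last n) ∈ A ∧ w (Fin.last (n + 1)) ∉ slitH := by
  rw [← isSlitWalk_snoc, Fin.snoc_init_self]

variable (A : Finset (ℤ × ℤ))

theorem finite_setOf_isSlitWalk (n : ℕ) : {w | IsSlitWalk A n w}.Finite := by
  induction n with
  | zero =>
    simp only [isSlitWalk_zero]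
    exact Set.finite_singleton _
  | succ n ih =>
    refine (ih.image2 (fun w s ↦ Fin.snoc (α := fun _ ↦ ℤ × ℤ) w (w (Fin.last n) + s))
      A.finite_toSet).subset fun w hw ↦ ?_
    obtain ⟨hinit, hstep, -⟩ := (isSlitWalk_succ A n w).mp hw
    exact ⟨Fin.init w, hinit, _, hstep, by simp⟩

/-- The walks on the slit plane of length `n` with steps in the finite set `A`. -/
noncomputable def slitWalks (n : ℕ) : Finset (Fin (n + 1) → ℤ × ℤ) :=
  (finite_setOf_isSlitWalk A n).toFinset

/-- The number of walks on the slit plane of length `n` with steps in `A` that end at `p`. -/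
noncomputable def slitCount (n : ℕ) (p : ℤ × ℤ) : ℕ :=
  Finset.card {w ∈ slitWalks A n | w (Fin.last n) = p}

variable {A} in
theorem mem_slitWalks {n : ℕ} {w : Fin (n + 1) → ℤ × ℤ} :
    w ∈ slitWalks A n ↔ IsSlitWalk A n w :=
  Set.Finite.mem_toFinset _

theorem slitTotal_eq_card_slitWalks (n : ℕ) : slitTotal A n = (slitWalks A n).card :=
  Nat.subtype_card _ fun _ ↦ mem_slitWalks

theorem slitWalks_zero : slitWalks A 0 = {fun _ ↦ (0, 0)} := by
  ext w
  rw [mem_slitWalks, isSlitWalk_zero, Finset.mem_singleton]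

theorem slitTotal_zero : slitTotal A 0 = 1 := by
  rw [slitTotal_eq_card_slitWalks, slitWalks_zero, Finset.card_singleton]

theorem slitCount_zero (p : ℤ × ℤ) : slitCount A 0 p = if p = (0, 0) then 1 else 0 := by
  rw [slitCount, slitWalks_zero, Finset.filter_singleton]
  split_ifs <;> simp_all

theorem slitCount_succ_of_mem (n : ℕ) {p : ℤ × ℤ} (hp : p ∈ slitH) :
    slitCount A (n + 1) p = 0 := by
  rw [slitCount, Finset.card_eq_zero, Finset.filter_eq_empty_iff]
  rintro w hw rfl
  exact ((isSlitWalk_succ _ _ _).mp (mem_slitWalks.mp hw)).2.2 hp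

theorem slitCount_succ_eq_card_of_notMem (n : ℕ) {p : ℤ × ℤ} (hp : p ∉ slitH) :
    slitCount A (n + 1) p = Finset.card {w ∈ slitWalks A n | p - w (Fin.last n) ∈ A} := by
  refine Finset.card_nbij' (Fin.init (α := fun _ ↦ ℤ × ℤ))
    (fun w ↦ Fin.snoc (α := fun _ ↦ ℤ × ℤ) w p) ?_ ?_ ?_ fun w _ ↦ Fin.init_snoc _ _
  · intro w hw
    simp only [Finset.coe_filter, Set.mem_ofPred_eq, mem_slitWalks, isSlitWalk_succ] at hw ⊢
    obtain ⟨⟨hinit, hstep, -⟩, rfl⟩ := hw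
    exact ⟨hinit, hstep⟩
  · intro w hw
    simp only [Finset.coe_filter, Set.mem_ofPred_eq, mem_slitWalks, isSlitWalk_snoc] at hw ⊢
    exact ⟨⟨hw.1, hw.2, hp⟩, Fin.snoc_last _ _⟩
  · intro w hw
    obtain rfl := (Finset.mem_filter.mp hw).2
    exact Fin.snoc_init_self w

theorem slitCount_succ_of_notMem (n : ℕ) {p : ℤ × ℤ} (hp : p ∉ slitH) :
    slitCount A (n + 1) p = ∑ s ∈ A, slitCount A n (p - s) := by
  have hmaps : Set.MapsTo (fun w : Fin (n + 1) → ℤ × ℤ ↦ p - w (Fin.last n))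
      ({w ∈ slitWalks A n | p - w (Fin.last n) ∈ A} : Finset _) A :=
    fun w hw ↦ (Finset.mem_filter.mp hw).2
  rw [slitCount_succ_eq_card_of_notMem A n hp, Finset.card_eq_sum_card_fiberwise hmaps]
  refine Finset.sum_congr rfl fun s hs ↦ congrArg Finset.card ?_
  rw [Finset.filter_filter]
  refine Finset.filter_congr fun w _ ↦ ⟨fun h ↦ ?_, fun h ↦ ?_⟩
  · rw [← h.2, sub_sub_cancel]
  · simp only [h, sub_sub_cancel, hs, true_and]

variable {A} {R : Type*} [Semiring R]

theorem slitCount_eq_of_recurrence {G D : ℕ → ℤ × ℤ → R}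
    (hzero : ∀ p, G 0 p = if p = (0, 0) then 1 else 0)
    (hsucc : ∀ n p, G (n + 1) p = ∑ s ∈ A, G n (p - s) + D (n + 1) p)
    (hslit : ∀ n, ∀ p ∈ slitH, G (n + 1) p = 0) (hD : ∀ n, ∀ p ∉ slitH, D n p = 0)
    (n : ℕ) (p : ℤ × ℤ) : (slitCount A n p : R) = G n p := by
  induction n generalizing p with
  | zero => rw [slitCount_zero, hzero, Nat.cast_ite, Nat.cast_one, Nat.cast_zero]
  | succ n ih =>
    by_cases hp : p ∈ slitH
    · rw [slitCount_succ_of_mem A n hp, hslit n p hp, Nat.cast_zero]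
    · rw [slitCount_succ_of_notMem A n hp, hsucc, hD _ p hp, add_zero, Nat.cast_sum]
      exact Finset.sum_congr rfl fun s _ ↦ ih _

variable [TopologicalSpace R]

variable (A) in
theorem hasSum_slitCount (n : ℕ) :
    HasSum (fun p ↦ (slitCount A n p : R)) (slitTotal A n) := by
  rw [slitTotal_eq_card_slitWalks,
    Finset.card_eq_sum_card_image (fun w ↦ w (Fin.last n)) (slitWalks A n), Nat.cast_sum]
  refine hasSum_sum_of_ne_finset_zero fun p hp ↦ ?_
  rw [slitCount, Finset.card_eq_zero.mpr, Nat.cast_zero]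
  exact Finset.filter_eq_empty_iff.mpr fun w hw h ↦ hp (Finset.mem_image.mpr ⟨w, hw, h⟩)

theorem slitTotal_succ [ContinuousAdd R] [T2Space R] {n : ℕ} {D : ℤ × ℤ → R} {d : R}
    (hcount : ∀ p, (slitCount A (n + 1) p : R) = ∑ s ∈ A, (slitCount A n (p - s) : R) + D p)
    (hD : HasSum D d) : (slitTotal A (n + 1) : R) = A.card * slitTotal A n + d := by
  have hshift (s : ℤ × ℤ) : HasSum (fun p ↦ (slitCount A n (p - s) : R)) (slitTotal A n) := by
    simpa only [Function.comp_def, Equiv.subRight_apply] using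
      (Equiv.subRight s).hasSum_iff.mpr (hasSum_slitCount (R := R) A n)
  have h := (hasSum_sum fun s (_ : s ∈ A) ↦ hshift s).add hD
  simp only [← hcount, Finset.sum_const, nsmul_eq_mul] at h
  exact (hasSum_slitCount A (n + 1)).unique h

end Counting

section GeneratingFunction

/-- The steps of the square lattice as a finset. -/
def squareSteps : Finset (ℤ × ℤ) := {(1, 0), (-1, 0), (0, 1), (0, -1)}

theorem coe_squareSteps : (squareSteps : Set (ℤ × ℤ)) = sqSteps := by
  simp [squareSteps, sqSteps]

theorem sum_squareSteps_sub {M : Type*} [AddCommMonoid M] (G : ℤ × ℤ → M) (i j : ℤ) :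
    ∑ s ∈ squareSteps, G ((i, j) - s) =
      G (i - 1, j) + G (i + 1, j) + G (i, j - 1) + G (i, j + 1) := by
  simp [squareSteps, add_assoc]

theorem slitCount_squareSteps (R : Type*) [CommRing R] [Algebra ℚ R] (n : ℕ) (p : ℤ × ℤ) :
    (slitCount squareSteps n p : R) = slitCoeff R n p :=
  slitCount_eq_of_recurrence (slitCoeff_zero R)
    (fun n p ↦ by rw [slitCoeff_succ, sum_squareSteps_sub])
    (fun n _ ↦ slitCoeff_succ_of_mem R n) (fun n _ ↦ slitDefect_of_notMem R n) n p

theorem slitTotal_sqSteps_succ (n : ℕ) : (slitTotal sqSteps (n + 1) : ℝ) =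
    4 * slitTotal sqSteps n + coeff (n + 1) (kernelFactor (0 : ℝ) * kernelFactor 1) := by
  have h := slitTotal_succ (A := squareSteps) (n := n) (fun ⟨i, j⟩ ↦ ?_)
    (hasSum_slitDefect ℝ (n + 1))
  · rwa [coe_squareSteps, show squareSteps.card = 4 from rfl, Nat.cast_ofNat] at h
  · simp only [slitCount_squareSteps, sum_squareSteps_sub, slitCoeff_succ]

theorem mk_slitTotal_mul_one_sub :
    (PowerSeries.mk fun n ↦ (slitTotal sqSteps n : ℝ)) * (1 - 4 * X) =
      kernelFactor 0 * kernelFactor 1 := by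
  ext n
  rw [mul_sub, mul_one, mul_left_comm, ← map_ofNat (C (R := ℝ)) 4, map_sub, coeff_C_mul]
  cases n with
  | zero =>
    rw [coeff_zero_mul_X, coeff_mk, ← coe_squareSteps, slitTotal_zero]
    simp [constantCoeff_kernelFactor]
  | succ n =>
    rw [coeff_succ_mul_X, coeff_mk, coeff_mk, slitTotal_sqSteps_succ]
    ring

end GeneratingFunction

section HalfAngle

variable {R : Type*} [CommRing R]

theorem expand_injective {p : ℕ} (hp : p ≠ 0) : Function.Injective (expand (R := R) p hp) := by
  intro f g h
  ext n
  rw [← coeff_expand_mul p hp f, h, coeff_expand_mul]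

variable [Algebra ℚ R]

theorem sqrtSeries_mul {f g : R⟦X⟧} (hf : constantCoeff f = 1) (hg : constantCoeff g = 1) :
    sqrtSeries (f * g) = sqrtSeries f * sqrtSeries g :=
  (eq_sqrtSeries (by rw [mul_pow, sqrtSeries_sq hf, sqrtSeries_sq hg])
    (by rw [map_mul, constantCoeff_sqrtSeries hf, constantCoeff_sqrtSeries hg, one_mul])).symm

theorem expand_sqrtSeries {p : ℕ} (hp : p ≠ 0) {f : R⟦X⟧} (hf : constantCoeff f = 1) :
    expand p hp (sqrtSeries f) = sqrtSeries (expand p hp f) :=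
  eq_sqrtSeries (by rw [← map_pow, sqrtSeries_sq hf])
    (by rw [constantCoeff_expand, constantCoeff_sqrtSeries hf])

theorem rescale_neg_one_sqrtSeries_one_add_X :
    rescale (-1 : R) (sqrtSeries (1 + X)) = sqrtSeries (1 - X) := by
  rw [rescale_sqrtSeries _ (by simp), map_add, map_one, rescale_neg_one_X, ← sub_eq_add_neg]

variable (R) in
/-- The series `√((1 + √(1 - X)) / 2)`, encoded through the half-angle formula as the even part of
`√(1 + Y)` with `Y ^ 2 = X`. -/
noncomputable def halfAngleSeries : R⟦X⟧ :=
  PowerSeries.mk fun n ↦ coeff (2 * n) (sqrtSeries (1 + X))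

theorem constantCoeff_halfAngleSeries : constantCoeff (halfAngleSeries R) = 1 := by
  rw [← coeff_zero_eq_constantCoeff_apply, halfAngleSeries, coeff_mk, mul_zero,
    coeff_zero_eq_constantCoeff_apply, constantCoeff_sqrtSeries (by simp)]

theorem two_mul_expand_halfAngleSeries :
    2 * expand 2 two_ne_zero (halfAngleSeries R) = sqrtSeries (1 + X) + sqrtSeries (1 - X) := by
  ext n
  rw [← map_ofNat (C (R := R)) 2, coeff_C_mul, coeff_expand, map_add,
    ← rescale_neg_one_sqrtSeries_one_add_X, coeff_rescale]
  split_ifs with h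
  · obtain ⟨m, rfl⟩ := h
    rw [halfAngleSeries, coeff_mk, Nat.mul_div_cancel_left _ two_pos, (even_two_mul m).neg_one_pow]
    ring
  · rw [(Nat.not_even_iff_odd.mp fun h' ↦ h h'.two_dvd).neg_one_pow]
    ring

theorem two_mul_halfAngleSeries_sq :
    2 * halfAngleSeries R ^ 2 = 1 + sqrtSeries (1 - X) := by
  have hadd : sqrtSeries (1 + X : R⟦X⟧) ^ 2 = 1 + X := sqrtSeries_sq (by simp)
  have hsub : sqrtSeries (1 - X : R⟦X⟧) ^ 2 = 1 - X := sqrtSeries_sq (by simp)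
  have hmul : expand 2 two_ne_zero (sqrtSeries (1 - X : R⟦X⟧)) =
      sqrtSeries (1 + X) * sqrtSeries (1 - X) := by
    rw [expand_sqrtSeries _ (by simp), ← sqrtSeries_mul (by simp) (by simp), map_sub, map_one,
      expand_X]
    ring_nf
  refine (isUnit_ofNat_of_ratAlgebra (R := R⟦X⟧) 2).mul_left_cancel
    (expand_injective two_ne_zero ?_)
  rw [map_mul, map_mul, map_mul, map_pow, map_ofNat, map_add, map_one, hmul]
  linear_combination (2 * expand 2 two_ne_zero (halfAngleSeries R) + sqrtSeries (1 + X) +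
    sqrtSeries (1 - X)) * two_mul_expand_halfAngleSeries (R := R) + hadd + hsub

theorem two_mul_rescale_halfAngleSeries_sq (a : R) :
    2 * rescale a (halfAngleSeries R) ^ 2 = 1 + sqrtSeries (1 - C a * X) := by
  have h := congrArg (rescale a) (two_mul_halfAngleSeries_sq (R := R))
  rwa [map_mul, map_pow, map_ofNat, map_add, map_one, rescale_sqrtSeries _ (by simp), map_sub,
    map_one, rescale_X] at h

theorem kernelFactor_zero : kernelFactor (0 : R) =
    rescale 4 (halfAngleSeries R * rescale (-1) (halfAngleSeries R)) := by
  refine eq_of_sq_eq_sq_of_constantCoeff_eq_one (isUnit_ofNat_of_ratAlgebra 2) ?_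
    (constantCoeff_kernelFactor 0) (by simp [constantCoeff_rescale, constantCoeff_halfAngleSeries])
  have hpos := two_mul_rescale_halfAngleSeries_sq (4 : R)
  have hneg := two_mul_rescale_halfAngleSeries_sq (-4 : R)
  rw [map_neg, neg_mul, sub_neg_eq_add, map_ofNat] at hneg
  rw [map_ofNat] at hpos
  refine (isUnit_ofNat_of_ratAlgebra 4).mul_left_cancel ?_
  rw [four_mul_kernelFactor_sq, map_zero, mul_zero, mul_zero, sub_zero, add_zero, ← hpos, ← hneg,
    map_mul, rescale_rescale]
  ring_nf

end HalfAngle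

section ExplicitForm

theorem binomialSeries_half : PowerSeries.binomialSeries ℝ (1 / 2 : ℝ) = sqrtSeries (1 + X) :=
  eq_sqrtSeries (by rw [binomialSeries_sq, mul_one_div_cancel two_ne_zero, binomialSeries_one])
    (by simp)

theorem rescale_binomialSeries_half (a : ℝ) :
    rescale a (PowerSeries.binomialSeries ℝ (1 / 2 : ℝ)) = sqrtSeries (1 + C a * X) := by
  rw [binomialSeries_half, rescale_sqrtSeries _ (by simp), map_add, map_one, rescale_X]

theorem rescale_binomialSeries_quarter_sq (a : ℝ) :
    rescale a (PowerSeries.binomialSeries ℝ (1 / 4 : ℝ)) ^ 2 = sqrtSeries (1 + C a * X) := by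
  rw [← map_pow, binomialSeries_sq, show (2 * (1 / 4) : ℝ) = 1 / 2 by norm_num,
    rescale_binomialSeries_half]

theorem kernelFactor_one :
    kernelFactor (1 : ℝ) = rescale (-4) (PowerSeries.binomialSeries ℝ (1 / 4 : ℝ)) := by
  refine eq_of_sq_eq_sq_of_constantCoeff_eq_one (isUnit_ofNat_of_ratAlgebra 2) ?_
    (constantCoeff_kernelFactor 1) (by simp [constantCoeff_rescale])
  rw [kernelFactor_one_sq, rescale_binomialSeries_quarter_sq, map_neg, map_ofNat, neg_mul,
    ← sub_eq_add_neg]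

theorem kernelFactor_one_eq_mul_one_sub :
    kernelFactor (1 : ℝ) =
      rescale (-4) (PowerSeries.binomialSeries ℝ (-(3 / 4) : ℝ)) * (1 - 4 * X) := by
  have hX : (1 - 4 * X : ℝ⟦X⟧) = rescale (-4) (1 + X) := by
    rw [map_add, map_one, rescale_X, map_neg, map_ofNat, neg_mul, ← sub_eq_add_neg]
  rw [kernelFactor_one, hX, ← map_mul, ← binomialSeries_one (R := ℝ), ← binomialSeries_add]
  norm_num

theorem mk_slitTotal_eq : (PowerSeries.mk fun n ↦ (slitTotal sqSteps n : ℝ)) =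
    rescale 4 (rescale (-1) (halfAngleSeries ℝ) * (halfAngleSeries ℝ *
      rescale (-1) (PowerSeries.binomialSeries ℝ (-(3 / 4) : ℝ)))) := by
  have hne : (1 - 4 * X : ℝ⟦X⟧) ≠ 0 := fun h ↦ by simpa using congrArg constantCoeff h
  refine mul_right_cancel₀ hne ?_
  rw [mk_slitTotal_mul_one_sub, kernelFactor_zero, kernelFactor_one_eq_mul_one_sub]
  simp only [map_mul, rescale_rescale, neg_one_mul]
  ring

end ExplicitForm

section CoefficientTransfer

variable {𝕜 : Type*} [NormedField 𝕜]

theorem coeff_mul_eq_tsum_ite (f g : 𝕜⟦X⟧) (n : ℕ) :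
    coeff n (g * f) = ∑' k, if k ≤ n then coeff k g * coeff (n - k) f else 0 := by
  rw [coeff_mul, Finset.Nat.sum_antidiagonal_eq_sum_range_succ fun i j ↦ coeff i g * coeff j f,
    tsum_eq_sum (s := Finset.range n.succ) fun k hk ↦
      if_neg (by rwa [Finset.mem_range_succ_iff] at hk)]
  exact Finset.sum_congr rfl fun k hk ↦ (if_pos (Finset.mem_range_succ_iff.mp hk)).symm

variable [NormedAlgebra ℝ 𝕜]

theorem tendsto_smul_coeff_sub {w : ℕ → ℝ} (hw : ∀ n, 0 < w n) {f : 𝕜⟦X⟧} {L : 𝕜} (k : ℕ)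
    (hshift : Tendsto (fun n ↦ w (n + k) / w n) atTop (nhds 1))
    (hf : Tendsto (fun n ↦ w n • coeff n f) atTop (nhds L)) :
    Tendsto (fun n ↦ w n • coeff (n - k) f) atTop (nhds L) := by
  rw [← tendsto_add_atTop_iff_nat k]
  have h := hshift.smul hf
  rw [one_smul] at h
  refine h.congr fun n ↦ ?_
  rw [Nat.add_sub_cancel, smul_smul, div_mul_cancel₀ _ (hw n).ne']

/- By dominated convergence in the Cauchy product: submultiplicativity of the weight bounds the
`k`-th term by a constant times `w k * ‖coeff k g‖`. -/
theorem tendsto_smul_coeff_mul [CompleteSpace 𝕜] {w : ℕ → ℝ} (hw : ∀ n, 0 < w n)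
    (hmul : ∀ m k, w (m + k) ≤ w m * w k)
    (hshift : ∀ k, Tendsto (fun n ↦ w (n + k) / w n) atTop (nhds 1)) {f g : 𝕜⟦X⟧} {L : 𝕜}
    (hf : Tendsto (fun n ↦ w n • coeff n f) atTop (nhds L))
    (hg : Summable fun n ↦ w n * ‖coeff n g‖) :
    Tendsto (fun n ↦ w n • coeff n (g * f)) atTop (nhds ((∑' n, coeff n g) * L)) := by
  obtain ⟨M, hM⟩ := hf.norm.bddAbove_range
  have hfM (n : ℕ) : w n * ‖coeff n f‖ ≤ M := by
    simpa [norm_smul, abs_of_pos (hw n)] using hM ⟨n, rfl⟩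
  have hM0 : 0 ≤ M := (mul_nonneg (hw 0).le (norm_nonneg _)).trans (hfM 0)
  have hterm (k : ℕ) : Tendsto
      (fun n ↦ w n • if k ≤ n then coeff k g * coeff (n - k) f else 0) atTop
      (nhds (coeff k g * L)) := by
    refine ((tendsto_smul_coeff_sub hw k (hshift k) hf).const_mul (coeff k g)).congr' ?_
    filter_upwards [eventually_ge_atTop k] with n hn
    rw [if_pos hn, mul_smul_comm]
  have hbound (n k : ℕ) : ‖w n • if k ≤ n then coeff k g * coeff (n - k) f else 0‖ ≤
      M * (w k * ‖coeff k g‖) := by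
    have hgk : 0 ≤ w k * ‖coeff k g‖ := mul_nonneg (hw k).le (norm_nonneg _)
    split_ifs with hk
    · obtain ⟨m, rfl⟩ := Nat.exists_eq_add_of_le' hk
      rw [Nat.add_sub_cancel, norm_smul, norm_mul, Real.norm_of_nonneg (hw _).le]
      calc w (m + k) * (‖coeff k g‖ * ‖coeff m f‖)
          ≤ w m * w k * (‖coeff k g‖ * ‖coeff m f‖) := by gcongr; exact hmul m k
        _ = w m * ‖coeff m f‖ * (w k * ‖coeff k g‖) := by ring
        _ ≤ M * (w k * ‖coeff k g‖) := by gcongr; exact hfM m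
    · rw [smul_zero, norm_zero]
      exact mul_nonneg hM0 hgk
  have h := tendsto_tsum_of_dominated_convergence (hg.mul_left M) hterm
    (Eventually.of_forall hbound)
  rw [tsum_mul_right] at h
  refine h.congr fun n ↦ ?_
  rw [tsum_const_smul'', coeff_mul_eq_tsum_ite]

end CoefficientTransfer

section BinomialAsymptotics

theorem neg_one_pow_mul_choose_neg {K : Type*} [Field K] [CharZero K] (s : K) (n : ℕ) :
    (-1) ^ n * Ring.choose (-s) n = (∏ j ∈ Finset.range n, (s + j)) / n.factorial := by
  have hprod : (descPochhammer ℤ n).smeval (-s) = ∏ j ∈ Finset.range n, (-(s + j)) := by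
    rw [← Polynomial.aeval_eq_smeval, Polynomial.aeval_def, ← Polynomial.eval_map,
      descPochhammer_map, descPochhammer_eval_eq_prod_range]
    simp only [neg_add']
  rw [Ring.choose_eq_smul, hprod, Finset.prod_neg, Finset.card_range, smul_eq_mul, mul_left_comm,
    ← mul_assoc ((-1) ^ n), ← mul_pow, neg_one_mul, neg_neg, one_pow, one_mul, div_eq_inv_mul]

theorem tendsto_add_one_rpow_shift (r : ℝ) (k : ℕ) :
    Tendsto (fun n : ℕ ↦ ((n + k : ℕ) + 1 : ℝ) ^ r / ((n : ℝ) + 1) ^ r) atTop (nhds 1) := by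
  have h : Tendsto (fun n : ℕ ↦ 1 + (k : ℝ) * (1 / ((n : ℝ) + 1))) atTop (nhds 1) := by
    simpa using (tendsto_one_div_add_atTop_nhds_zero_nat.const_mul (k : ℝ)).const_add 1
  have hr := h.rpow_const (p := r) (Or.inl one_ne_zero)
  rw [Real.one_rpow] at hr
  refine hr.congr fun n ↦ ?_
  rw [← Real.div_rpow (by positivity) (by positivity)]
  congr 1
  push_cast
  field_simp
  ring

theorem tendsto_add_one_rpow_div_rpow (r : ℝ) :
    Tendsto (fun n : ℕ ↦ ((n : ℝ) + 1) ^ r / (n : ℝ) ^ r) atTop (nhds 1) := by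
  rw [← tendsto_add_atTop_iff_nat 1]
  refine (tendsto_add_one_rpow_shift r 1).congr fun n ↦ ?_
  rw [Nat.cast_add_one]

theorem tendsto_rpow_mul_choose_neg {s : ℝ} (hs : ∀ m : ℕ, s ≠ -m) :
    Tendsto (fun n : ℕ ↦ ((n : ℝ) + 1) ^ (1 - s) * ((-1) ^ n * Ring.choose (-s) n)) atTop
      (nhds (Real.Gamma s)⁻¹) := by
  have hGamma := (Real.GammaSeq_tendsto_Gamma s).inv₀ (Real.Gamma_ne_zero hs)
  have h := ((tendsto_add_one_rpow_div_rpow (1 - s)).mul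
    (tendsto_natCast_div_add_atTop s)).mul hGamma
  rw [one_mul, one_mul] at h
  refine h.congr' ?_
  filter_upwards [eventually_gt_atTop 0] with n hn
  have hn' : (0 : ℝ) < n := Nat.cast_pos.mpr hn
  have hsn (j : ℕ) : s + j ≠ 0 := fun h ↦ hs j (eq_neg_of_add_eq_zero_left h)
  have hprod : ∏ j ∈ Finset.range n, (s + j) ≠ 0 := Finset.prod_ne_zero_iff.mpr fun j _ ↦ hsn j
  have hrpow : (n : ℝ) ^ s ≠ 0 := (Real.rpow_pos_of_pos hn' s).ne'
  have := hsn n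
  rw [neg_one_pow_mul_choose_neg, Real.GammaSeq, Finset.prod_range_succ, Real.rpow_sub hn',
    Real.rpow_one, add_comm (n : ℝ) s]
  field_simp

theorem summable_rpow_mul_abs_choose {r a : ℝ} (ha : a < r) :
    Summable fun n : ℕ ↦ ((n : ℝ) + 1) ^ a * |Ring.choose r n| := by
  by_cases! hr : ∃ m : ℕ, r = m
  · obtain ⟨m, rfl⟩ := hr
    refine summable_of_ne_finset_zero (s := Finset.range (m + 1)) fun n hn ↦ ?_
    rw [Finset.mem_range_succ_iff, not_le] at hn
    rw [Ring.choose_natCast, Nat.choose_eq_zero_of_lt hn, Nat.cast_zero, abs_zero, mul_zero]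
  have hlim := tendsto_rpow_mul_choose_neg (s := -r) fun m h ↦ hr m (neg_inj.mp h)
  obtain ⟨M, hM⟩ := hlim.abs.bddAbove_range
  have hsum : Summable fun n : ℕ ↦ ((n : ℝ) + 1) ^ (a - r - 1) := by
    have h := (summable_nat_add_iff 1).mpr (Real.summable_nat_rpow.mpr
      (show a - r - 1 < -1 by linarith))
    simpa only [Nat.cast_add_one] using h
  refine Summable.of_nonneg_of_le (fun n ↦ by positivity) (fun n ↦ ?_) (hsum.mul_left M)
  have hn : (0 : ℝ) < (n : ℝ) + 1 := by positivity
  have hMn : ((n : ℝ) + 1) ^ (1 + r) * |Ring.choose r n| ≤ M := by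
    simpa [abs_mul, abs_of_pos (Real.rpow_pos_of_pos hn _)] using hM ⟨n, rfl⟩
  calc ((n : ℝ) + 1) ^ a * |Ring.choose r n|
      = ((n : ℝ) + 1) ^ (1 + r) * |Ring.choose r n| * ((n : ℝ) + 1) ^ (a - r - 1) := by
        rw [mul_right_comm, ← Real.rpow_add hn]
        ring_nf
    _ ≤ M * ((n : ℝ) + 1) ^ (a - r - 1) := by gcongr

end BinomialAsymptotics

section CoefficientSums

variable {𝕜 : Type*} [NormedField 𝕜]

theorem summable_norm_coeff_rescale {f : 𝕜⟦X⟧} (hf : Summable fun n ↦ ‖coeff n f‖) {a : 𝕜}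
    (ha : ‖a‖ ≤ 1) : Summable fun n ↦ ‖coeff n (rescale a f)‖ := by
  refine Summable.of_nonneg_of_le (fun n ↦ norm_nonneg _) (fun n ↦ ?_) hf
  rw [coeff_rescale, norm_mul, norm_pow]
  exact mul_le_of_le_one_left (norm_nonneg _) (pow_le_one₀ (norm_nonneg _) ha)

theorem tsum_coeff_sq [CompleteSpace 𝕜] {f : 𝕜⟦X⟧} (hf : Summable fun n ↦ ‖coeff n f‖) :
    ∑' n, coeff n (f ^ 2) = (∑' n, coeff n f) ^ 2 := by
  rw [sq, sq, tsum_mul_tsum_eq_tsum_sum_antidiagonal_of_summable_norm hf hf]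
  exact tsum_congr fun n ↦ coeff_mul n f f

theorem tsum_coeff_one_add_C_mul_X (a : 𝕜) :
    ∑' n, coeff n (1 + C a * X : 𝕜⟦X⟧) = 1 + a := by
  rw [tsum_eq_sum (s := Finset.range 2) fun n hn ↦ ?_]
  · simp [Finset.sum_range_succ, coeff_X, coeff_one]
  · have hn' : 2 ≤ n := not_lt.mp (Finset.mem_range.not.mp hn)
    simp [coeff_X, coeff_one, show n ≠ 0 by lia, show n ≠ 1 by lia]

end CoefficientSums

section BoundaryValues

theorem summable_norm_coeff_binomialSeries {r : ℝ} (hr : 0 < r) :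
    Summable fun n ↦ ‖coeff n (PowerSeries.binomialSeries ℝ r)‖ := by
  simpa using summable_rpow_mul_abs_choose hr

theorem hasSum_coeff_sqrtSeries_one_add_C_mul_X {a : ℝ} (ha : |a| ≤ 1) :
    HasSum (fun n ↦ coeff n (sqrtSeries (1 + C a * X : ℝ⟦X⟧))) √(1 + a) := by
  have hquarter := summable_norm_coeff_rescale (𝕜 := ℝ)
    (summable_norm_coeff_binomialSeries (r := 1 / 4) (by norm_num)) ha
  have hhalf : Summable fun n ↦ ‖coeff n (sqrtSeries (1 + C a * X : ℝ⟦X⟧))‖ := by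
    rw [← rescale_binomialSeries_half]
    exact summable_norm_coeff_rescale (summable_norm_coeff_binomialSeries one_half_pos) ha
  have hnonneg : 0 ≤ ∑' n, coeff n (sqrtSeries (1 + C a * X : ℝ⟦X⟧)) := by
    rw [← rescale_binomialSeries_quarter_sq, tsum_coeff_sq hquarter]
    positivity
  have hsq := tsum_coeff_sq hhalf
  rw [sqrtSeries_sq (by simp), tsum_coeff_one_add_C_mul_X] at hsq
  rw [hsq, Real.sqrt_sq hnonneg]
  exact hhalf.of_norm.hasSum

theorem coeff_halfAngleSeries (n : ℕ) :
    coeff n (halfAngleSeries ℝ) = Ring.choose (1 / 2 : ℝ) (2 * n) := by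
  rw [halfAngleSeries, coeff_mk, ← binomialSeries_half, PowerSeries.binomialSeries_coeff,
    smul_eq_mul, mul_one]

theorem summable_rpow_mul_norm_coeff_halfAngleSeries {r : ℝ} (hr0 : 0 ≤ r) (hr : r < 1 / 2) :
    Summable fun n : ℕ ↦ ((n : ℝ) + 1) ^ r * ‖coeff n (halfAngleSeries ℝ)‖ := by
  have hsum := (summable_rpow_mul_abs_choose hr).comp_injective
    (mul_right_injective₀ two_ne_zero)
  refine Summable.of_nonneg_of_le (fun n ↦ by positivity) (fun n ↦ ?_) hsum
  rw [coeff_halfAngleSeries, Real.norm_eq_abs, Function.comp_apply]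
  gcongr
  lia

theorem summable_norm_coeff_halfAngleSeries :
    Summable fun n ↦ ‖coeff n (halfAngleSeries ℝ)‖ := by
  simpa using summable_rpow_mul_norm_coeff_halfAngleSeries le_rfl one_half_pos

theorem two_mul_tsum_coeff_rescale_halfAngleSeries_sq {a : ℝ} (ha : |a| ≤ 1) :
    2 * (∑' n, coeff n (rescale a (halfAngleSeries ℝ))) ^ 2 = 1 + √(1 - a) := by
  have hone : HasSum (fun n ↦ coeff n (1 : ℝ⟦X⟧)) 1 := by
    simpa [coeff_one] using hasSum_ite_eq 0 (1 : ℝ)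
  have hsqrt := hasSum_coeff_sqrtSeries_one_add_C_mul_X (a := -a) (by rwa [abs_neg])
  rw [map_neg, neg_mul, ← sub_eq_add_neg, ← sub_eq_add_neg] at hsqrt
  rw [← tsum_coeff_sq (summable_norm_coeff_rescale summable_norm_coeff_halfAngleSeries ha),
    ← tsum_mul_left, ← (hone.add hsqrt).tsum_eq]
  refine tsum_congr fun n ↦ ?_
  rw [← map_add, ← two_mul_rescale_halfAngleSeries_sq, ← map_ofNat (C (R := ℝ)) 2, coeff_C_mul]

end BoundaryValues

section Asymptotics

theorem slitTotal_div_pow (n : ℕ) : (slitTotal sqSteps n : ℝ) / 4 ^ n =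
    coeff n (rescale (-1) (halfAngleSeries ℝ) *
      (halfAngleSeries ℝ * rescale (-1) (PowerSeries.binomialSeries ℝ (-(3 / 4) : ℝ)))) := by
  have h := congrArg (coeff n) mk_slitTotal_eq
  rw [coeff_mk, coeff_rescale] at h
  rw [h, mul_div_cancel_left₀ _ (by positivity)]

theorem tendsto_rpow_mul_slitTotal :
    Tendsto (fun n : ℕ ↦ ((n : ℝ) + 1) ^ (1 / 4 : ℝ) * (slitTotal sqSteps n / 4 ^ n)) atTop
      (nhds ((∑' n, coeff n (rescale (-1) (halfAngleSeries ℝ))) *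
        ((∑' n, coeff n (halfAngleSeries ℝ)) * (Real.Gamma (3 / 4))⁻¹))) := by
  have hmul (m k : ℕ) : (((m + k : ℕ) : ℝ) + 1) ^ (1 / 4 : ℝ) ≤
      ((m : ℝ) + 1) ^ (1 / 4 : ℝ) * ((k : ℝ) + 1) ^ (1 / 4 : ℝ) := by
    rw [← Real.mul_rpow (by positivity) (by positivity)]
    gcongr
    push_cast
    nlinarith [mul_nonneg (m.cast_nonneg (α := ℝ)) (k.cast_nonneg (α := ℝ))]
  have hpos (n : ℕ) : 0 < ((n : ℝ) + 1) ^ (1 / 4 : ℝ) := by positivity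
  have hbinom := tendsto_rpow_mul_choose_neg (s := 3 / 4) fun m ↦ by
    have : (0 : ℝ) ≤ m := m.cast_nonneg
    linarith
  rw [show (1 - 3 / 4 : ℝ) = 1 / 4 by norm_num] at hbinom
  have hsum := summable_rpow_mul_norm_coeff_halfAngleSeries (r := 1 / 4) (by norm_num)
    (by norm_num)
  have hsum_neg : Summable fun n : ℕ ↦
      ((n : ℝ) + 1) ^ (1 / 4 : ℝ) * ‖coeff n (rescale (-1) (halfAngleSeries ℝ))‖ := by
    simpa [coeff_rescale] using hsum
  have htransfer := tendsto_smul_coeff_mul hpos hmul (tendsto_add_one_rpow_shift _)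
    (tendsto_smul_coeff_mul hpos hmul (tendsto_add_one_rpow_shift _)
      (f := rescale (-1) (PowerSeries.binomialSeries ℝ (-(3 / 4) : ℝ)))
      (by simpa [coeff_rescale] using hbinom) hsum) hsum_neg
  simpa only [slitTotal_div_pow, smul_eq_mul] using htransfer

theorem tsum_coeff_halfAngleSeries_mul_tsum_coeff_rescale :
    (∑' n, coeff n (rescale (-1) (halfAngleSeries ℝ))) * (∑' n, coeff n (halfAngleSeries ℝ)) =
      √(1 + √2) / 2 := by
  have hone := two_mul_tsum_coeff_rescale_halfAngleSeries_sq (a := 1) (by norm_num)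
  have hneg := two_mul_tsum_coeff_rescale_halfAngleSeries_sq (a := -1) (by norm_num)
  rw [rescale_one, RingHom.id_apply, sub_self, Real.sqrt_zero, add_zero] at hone
  rw [sub_neg_eq_add, one_add_one_eq_two] at hneg
  have hGamma : 0 < Real.Gamma (3 / 4) := Real.Gamma_pos_of_pos (by norm_num)
  have hnonneg := ge_of_tendsto' tendsto_rpow_mul_slitTotal fun n ↦ by positivity
  rw [← mul_assoc] at hnonneg
  refine (sq_eq_sq₀ (nonneg_of_mul_nonneg_left hnonneg (inv_pos.mpr hGamma)) (by positivity)).mp ?_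
  rw [div_pow, Real.sq_sqrt (by positivity), mul_pow]
  linear_combination (1 / 2 * (∑' n, coeff n (rescale (-1) (halfAngleSeries ℝ))) ^ 2) * hone +
    1 / 4 * hneg

end Asymptotics

/-- `a(n) ∼ (√(1+√2)/(2Γ(3/4))) · 4ⁿ · n^{−1/4}` as `n → ∞`. -/
theorem slit_plane_asymptotics :
    Tendsto (fun n : ℕ =>
        (slitTotal sqSteps n : ℝ) /
          (Real.sqrt (1 + Real.sqrt 2) / (2 * Real.Gamma (3/4))
            * 4 ^ n * (n : ℝ) ^ (-(1/4 : ℝ))))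
      atTop (nhds 1) := by
  have hGamma : Real.Gamma (3 / 4) ≠ 0 := (Real.Gamma_pos_of_pos (by norm_num)).ne'
  have hsqrt : √(1 + √2) ≠ 0 := by positivity
  have hlim := tendsto_rpow_mul_slitTotal
  rw [← mul_assoc, tsum_coeff_halfAngleSeries_mul_tsum_coeff_rescale] at hlim
  have h := ((hlim.div (tendsto_add_one_rpow_div_rpow (1 / 4)) one_ne_zero).div_const
    (√(1 + √2) / (2 * Real.Gamma (3 / 4))))
  have hconst : √(1 + √2) / 2 * (Real.Gamma (3 / 4))⁻¹ / 1 / (√(1 + √2) / (2 * Real.Gamma (3 / 4)))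
      = 1 := by field_simp
  rw [hconst] at h
  refine h.congr' ?_
  filter_upwards [eventually_gt_atTop 0] with n hn
  have hn' : (0 : ℝ) < n := Nat.cast_pos.mpr hn
  simp only [Pi.div_apply]
  rw [Real.rpow_neg hn'.le]
  field_simp
end

section
/- As n → ∞, the total number a(n) of n-step walks on the slit plane with diagonal steps satisfies a(n) ∼ (1 / (2^{1/4}·Γ(3/4))) · 4ⁿ · n^{−1/4}. -/
open Filter PowerSeries

/-- The four diagonal steps. -/
def diagSteps : Set (ℤ × ℤ) := {(1,1), (1,-1), (-1,1), (-1,-1)}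

/-!
Kernel method. Uniform diagonal steps are pairs of independent steps `(T + T⁻¹) / 2` and
`(U + U⁻¹) / 2`, so the walks that end on the axis have the generating function
`E = 1 / √(1 - t² (T + T⁻¹)² / 4)`. In the angle `θ = arcsin t` the kernel splits as
`1 - t² (T + T⁻¹)² / 4 = (cos² (θ/2) - T² sin² (θ/2)) (cos² (θ/2) - T⁻² sin² (θ/2))`, whence
`E Φ(T) Φ(T⁻¹) = 1` with `Φ(x) = √(cos² (θ/2) - x² sin² (θ/2))`. The walks that avoid the half-line
are counted by `B / (1 - t (T + T⁻¹) (U + U⁻¹) / 4)`, where `B` involves only powers `T ^ i` with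
`i ≤ 0` and `B E` equals `1` plus positive powers of `T`; this forces `B = cos (θ/2) Φ(T⁻¹)`. At
`T = U = 1` one finds
`B / (1 - t) = (((1 + t) / (1 - t)) ^ (1/4) + ((1 + t) / (1 - t)) ^ (3/4)) / 2`. The coefficients of
`(1 - t) ^ (-α)` are asymptotic to `n ^ (α - 1) / Γ(α)`, the factor `(1 + t) ^ α` contributes its
value `2 ^ α` at `t = 1`, and the summand with `α = 3/4` dominates.
-/

namespace DiagonalSlit

open scoped Polynomial LaurentPolynomial

section BinomialPowers

/-- The power series `(1 + c t) ^ r`. -/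
noncomputable def binomialPow (c r : ℝ) : ℝ⟦X⟧ := rescale c (PowerSeries.binomialSeries ℝ r)

lemma coeff_binomialPow (c r : ℝ) (n : ℕ) :
    coeff n (binomialPow c r) = c ^ n * Ring.choose r n := by
  rw [binomialPow, coeff_rescale, binomialSeries_coeff, smul_eq_mul, mul_one]

lemma constantCoeff_binomialPow (c r : ℝ) : constantCoeff (binomialPow c r) = 1 := by
  rw [← coeff_zero_eq_constantCoeff_apply, coeff_binomialPow, pow_zero, one_mul,
    Ring.choose_zero_right]

lemma binomialPow_add (c r s : ℝ) :
    binomialPow c (r + s) = binomialPow c r * binomialPow c s := by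
  rw [binomialPow, binomialSeries_add, map_mul, binomialPow, binomialPow]

lemma binomialPow_zero (c : ℝ) : binomialPow c 0 = 1 := by
  rw [binomialPow, binomialSeries_zero, map_one]

lemma binomialPow_one (c : ℝ) : binomialPow c 1 = 1 + C c * X := by
  have h : PowerSeries.binomialSeries ℝ (1 : ℝ) = 1 + X := by
    simpa using binomialSeries_nat (R := ℝ) (A := ℝ) 1
  rw [binomialPow, h, map_add, map_one, rescale_X]

lemma binomialPow_half_sq (c r : ℝ) : binomialPow c (r / 2) ^ 2 = binomialPow c r := by
  rw [sq, ← binomialPow_add, add_halves]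

lemma mk_one_eq_binomialPow : (mk 1 : ℝ⟦X⟧) = binomialPow (-1) (-1) := by
  have h : binomialPow (-1) (-1) * (1 - X) = 1 := by
    have hone : binomialPow (-1) 1 = 1 - X := by
      rw [binomialPow_one, map_neg, map_one, neg_one_mul, sub_eq_add_neg]
    rw [← hone, ← binomialPow_add, neg_add_cancel, binomialPow_zero]
  calc mk 1 = mk 1 * (binomialPow (-1) (-1) * (1 - X)) := by rw [h, mul_one]
    _ = binomialPow (-1) (-1) * (mk 1 * (1 - X)) := by ring
    _ = binomialPow (-1) (-1) := by rw [mk_one_mul_one_sub_eq_one, mul_one]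

end BinomialPowers

section SquareRoots

variable {A : Type*} [CommRing A]

lemma hasSubst_sub_one {f : A⟦X⟧} (hf : constantCoeff f = 1) : HasSubst (f - 1) :=
  HasSubst.of_constantCoeff_zero' (by rw [map_sub, hf, map_one, sub_self])

variable [Algebra ℚ A]

/-- The square root with constant coefficient `1` of a series with constant coefficient `1`. -/
noncomputable def sqrtSeries (f : A⟦X⟧) : A⟦X⟧ :=
  (PowerSeries.binomialSeries ℚ (1 / 2 : ℚ)).subst (f - 1)

lemma constantCoeff_sqrtSeries {f : A⟦X⟧} (hf : constantCoeff f = 1) :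
    constantCoeff (sqrtSeries f) = 1 := by
  have h := constantCoeff_subst_eq_zero (by rw [map_sub, hf, map_one, sub_self] :
    constantCoeff (f - 1) = 0) (PowerSeries.binomialSeries ℚ (1 / 2 : ℚ) - 1) (by simp)
  rwa [← coe_substAlgHom (hasSubst_sub_one hf), map_sub, map_one, map_sub, map_one,
    coe_substAlgHom, sub_eq_zero] at h

lemma sqrtSeries_sq {f : A⟦X⟧} (hf : constantCoeff f = 1) : sqrtSeries f ^ 2 = f := by
  have hsqrt : PowerSeries.binomialSeries ℚ (1 / 2 : ℚ) ^ 2 = 1 + X := by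
    rw [sq, ← binomialSeries_add, add_halves]
    simpa using binomialSeries_nat (R := ℚ) (A := ℚ) 1
  rw [sqrtSeries, ← coe_substAlgHom (hasSubst_sub_one hf), ← map_pow, hsqrt, map_add, map_one,
    substAlgHom_X, add_sub_cancel]

lemma eq_of_sq_eq_sq_of_constantCoeff_eq_one {a b : A⟦X⟧} (ha : constantCoeff a = 1)
    (hb : constantCoeff b = 1) (h : a ^ 2 = b ^ 2) : a = b := by
  have isUnit_constantCoeff : IsUnit (constantCoeff (a + b)) := by
    rw [map_add, ha, hb, one_add_one_eq_two, ← map_ofNat (algebraMap ℚ A)]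
    exact (IsUnit.mk0 (2 : ℚ) two_ne_zero).map _
  have hprod : (a + b) * (a - b) = 0 := by linear_combination h
  exact sub_eq_zero.1 ((isUnit_iff_constantCoeff.2 isUnit_constantCoeff).mul_right_eq_zero.1 hprod)

end SquareRoots

section HalfAngle

/-- The series `cos (arcsin t / 2)`. -/
noncomputable def cosHalf : ℝ⟦X⟧ :=
  C (1 / 2) * (binomialPow 1 (1 / 2) + binomialPow (-1) (1 / 2))

/-- The series `sin (arcsin t / 2)`. -/
noncomputable def sinHalf : ℝ⟦X⟧ :=
  C (1 / 2) * (binomialPow 1 (1 / 2) - binomialPow (-1) (1 / 2))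

lemma binomialPow_neg_one_half_sq : binomialPow (-1) (1 / 2) ^ 2 = 1 - X := by
  rw [binomialPow_half_sq, binomialPow_one, map_neg, map_one, neg_one_mul, sub_eq_add_neg]

lemma binomialPow_one_half_sq : binomialPow 1 (1 / 2) ^ 2 = 1 + X := by
  rw [binomialPow_half_sq, binomialPow_one, map_one, one_mul]

lemma two_mul_C_half : 2 * C (1 / 2) = (1 : ℝ⟦X⟧) := by
  rw [← map_ofNat (C : ℝ →+* ℝ⟦X⟧), ← map_mul, ← map_one C]
  norm_num

lemma cosHalf_sq_add_sinHalf_sq : cosHalf ^ 2 + sinHalf ^ 2 = 1 := by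
  rw [cosHalf, sinHalf]
  linear_combination 2 * C (1 / 2) ^ 2 * (binomialPow_one_half_sq + binomialPow_neg_one_half_sq) +
    (2 * C (1 / 2) + 1) * two_mul_C_half

lemma two_mul_cosHalf_mul_sinHalf : 2 * (cosHalf * sinHalf) = X := by
  rw [cosHalf, sinHalf]
  linear_combination 2 * C (1 / 2) ^ 2 * (binomialPow_one_half_sq - binomialPow_neg_one_half_sq) +
    X * (2 * C (1 / 2) + 1) * two_mul_C_half

lemma cosHalf_sq_sub_sinHalf_sq :
    cosHalf ^ 2 - sinHalf ^ 2 = binomialPow 1 (1 / 2) * binomialPow (-1) (1 / 2) := by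
  rw [cosHalf, sinHalf]
  linear_combination binomialPow 1 (1 / 2) * binomialPow (-1) (1 / 2) *
    (2 * C (1 / 2) + 1) * two_mul_C_half

lemma constantCoeff_cosHalf : constantCoeff cosHalf = 1 := by
  simp [cosHalf, constantCoeff_binomialPow, one_add_one_eq_two]

lemma constantCoeff_sinHalf : constantCoeff sinHalf = 0 := by
  simp [sinHalf, constantCoeff_binomialPow]

end HalfAngle

section Kernel

/-- The step distribution `(T + T⁻¹) / 2` of the simple random walk on `ℤ`. Either coordinate of a
uniform diagonal step has this law, and the two coordinates are independent. -/
noncomputable def simpleStep : ℝ[T;T⁻¹] :=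
  LaurentPolynomial.C (1 / 2) * (LaurentPolynomial.T 1 + LaurentPolynomial.T (-1))

lemma two_mul_simpleStep :
    2 * simpleStep = LaurentPolynomial.T 1 + LaurentPolynomial.T (-1) := by
  rw [simpleStep, ← mul_assoc, ← map_ofNat LaurentPolynomial.C, ← map_mul, mul_one_div_cancel
    two_ne_zero, map_one, one_mul]

/-- The substitution `x ↦ T⁻¹`. -/
noncomputable def toLaurentInv : ℝ[X] →+* ℝ[T;T⁻¹] :=
  (LaurentPolynomial.invert (R := ℝ) : ℝ[T;T⁻¹] →+* ℝ[T;T⁻¹]).comp Polynomial.toLaurent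

/-- The series `cos² - x² sin²` in the half angle. -/
noncomputable def kernelFactor : ℝ[X]⟦X⟧ :=
  PowerSeries.map Polynomial.C cosHalf ^ 2 -
    (PowerSeries.map Polynomial.C sinHalf * C Polynomial.X) ^ 2

/-- The square root of `kernelFactor`. Its specializations at `x = T` and `x = T⁻¹` multiply to
`√(1 - t² (T + T⁻¹)² / 4)`: they are the factors of the kernel method. -/
noncomputable def kernelRoot : ℝ[X]⟦X⟧ := sqrtSeries kernelFactor

lemma constantCoeff_map {A B : Type*} [Semiring A] [Semiring B] (f : A →+* B) (p : A⟦X⟧) :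
    constantCoeff (PowerSeries.map f p) = f (constantCoeff p) := by
  simp only [← coeff_zero_eq_constantCoeff_apply, coeff_map]

lemma constantCoeff_kernelFactor : constantCoeff kernelFactor = 1 := by
  simp [kernelFactor, constantCoeff_map, constantCoeff_cosHalf, constantCoeff_sinHalf]

lemma constantCoeff_kernelRoot : constantCoeff kernelRoot = 1 :=
  constantCoeff_sqrtSeries constantCoeff_kernelFactor

lemma map_kernelRoot_sq {B : Type*} [CommRing B] (f : ℝ[X] →+* B) :
    PowerSeries.map f kernelRoot ^ 2 = PowerSeries.map (f.comp Polynomial.C) cosHalf ^ 2 -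
      (PowerSeries.map (f.comp Polynomial.C) sinHalf * C (f Polynomial.X)) ^ 2 := by
  rw [← map_pow, kernelRoot, sqrtSeries_sq constantCoeff_kernelFactor, kernelFactor]
  simp only [map_sub, map_pow, map_mul, map_C, map_comp, RingHom.comp_apply]

lemma map_eval_kernelRoot_sq (a : ℝ) :
    PowerSeries.map (Polynomial.evalRingHom a) kernelRoot ^ 2 =
      cosHalf ^ 2 - (sinHalf * C a) ^ 2 := by
  have hC : (Polynomial.evalRingHom a).comp Polynomial.C = RingHom.id ℝ := by ext; simp
  rw [map_kernelRoot_sq, hC, Polynomial.coe_evalRingHom, Polynomial.eval_X, PowerSeries.map_id]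
  rfl

lemma map_eval_zero_kernelRoot :
    PowerSeries.map (Polynomial.evalRingHom 0) kernelRoot = cosHalf := by
  apply eq_of_sq_eq_sq_of_constantCoeff_eq_one _ constantCoeff_cosHalf
  · rw [map_eval_kernelRoot_sq, map_zero, mul_zero, zero_pow two_ne_zero, sub_zero]
  · rw [constantCoeff_map, constantCoeff_kernelRoot, map_one]

lemma map_eval_one_kernelRoot : PowerSeries.map (Polynomial.evalRingHom 1) kernelRoot =
    binomialPow 1 (1 / 4) * binomialPow (-1) (1 / 4) := by
  apply eq_of_sq_eq_sq_of_constantCoeff_eq_one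
  · rw [constantCoeff_map, constantCoeff_kernelRoot, map_one]
  · rw [map_mul, constantCoeff_binomialPow, constantCoeff_binomialPow, one_mul]
  · rw [map_eval_kernelRoot_sq, map_one, mul_one, cosHalf_sq_sub_sinHalf_sq, mul_pow,
      show (1 / 4 : ℝ) = 1 / 2 / 2 by norm_num, binomialPow_half_sq, binomialPow_half_sq]

lemma one_sub_simpleStep_sq_eq :
    1 - (C simpleStep * X) ^ 2 = (PowerSeries.map Polynomial.toLaurent kernelRoot *
      PowerSeries.map toLaurentInv kernelRoot) ^ 2 := by
  have hp : (Polynomial.toLaurent (R := ℝ)).comp Polynomial.C = LaurentPolynomial.C :=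
    RingHom.ext Polynomial.toLaurent_C
  have hm : toLaurentInv.comp Polynomial.C = LaurentPolynomial.C := by
    ext a
    simp [toLaurentInv]
  have hmX : toLaurentInv Polynomial.X = LaurentPolynomial.T (-1) := by simp [toLaurentInv]
  rw [mul_pow (PowerSeries.map _ _), map_kernelRoot_sq, map_kernelRoot_sq, hp, hm, hmX,
    Polynomial.toLaurent_X]
  set c := PowerSeries.map LaurentPolynomial.C cosHalf
  set s := PowerSeries.map LaurentPolynomial.C sinHalf
  set u : ℝ[T;T⁻¹]⟦X⟧ := C (LaurentPolynomial.T 1)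
  set v : ℝ[T;T⁻¹]⟦X⟧ := C (LaurentPolynomial.T (-1))
  have huv : u * v = 1 := by
    rw [← map_mul, ← LaurentPolynomial.T_add, add_neg_cancel, LaurentPolynomial.T_zero, map_one]
  have hcs : c ^ 2 + s ^ 2 = 1 := by
    simpa using congrArg (PowerSeries.map LaurentPolynomial.C) cosHalf_sq_add_sinHalf_sq
  have hX : 2 * (c * s) = X := by
    simpa [map_ofNat] using
      congrArg (PowerSeries.map LaurentPolynomial.C) two_mul_cosHalf_mul_sinHalf
  have hstep : 2 * C simpleStep = u + v := by
    rw [← map_add, ← two_mul_simpleStep, map_mul, map_ofNat]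
  have hstepX : C simpleStep * X = c * s * (u + v) := by
    linear_combination -C simpleStep * hX + c * s * hstep
  rw [hstepX]
  linear_combination -(c ^ 2 + s ^ 2 + 1) * hcs - (s ^ 4 * (u * v + 1) + 2 * c ^ 2 * s ^ 2) * huv

end Kernel

section ReturnProbabilities

lemma coeff_simpleStep_pow_zero (n : ℕ) : (simpleStep ^ n).coeff 0 =
    ∑ m ∈ Finset.range (n + 1), if (2 * m : ℤ) = n then (n.choose m : ℝ) / 2 ^ n else 0 := by
  have hpow : simpleStep ^ n = ∑ m ∈ Finset.range (n + 1),
      ((n.choose m : ℝ) / 2 ^ n) • LaurentPolynomial.T (2 * m - n : ℤ) := by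
    rw [simpleStep, mul_pow, ← map_pow, ← LaurentPolynomial.smul_eq_C_mul, add_pow,
      Finset.smul_sum]
    refine Finset.sum_congr rfl fun m hm ↦ ?_
    have hmn : m ≤ n := Finset.mem_range_succ_iff.1 hm
    rw [LaurentPolynomial.T_pow, LaurentPolynomial.T_pow, ← LaurentPolynomial.T_add,
      ← nsmul_eq_mul', ← Nat.cast_smul_eq_nsmul ℝ, smul_smul, one_div, inv_pow, mul_comm,
      ← div_eq_mul_inv]
    congr 2
    push_cast [hmn]
    ring
  rw [hpow, AddMonoidAlgebra.coeff_sum, Finsupp.finsetSum_apply]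
  refine Finset.sum_congr rfl fun m _ ↦ ?_
  rw [AddMonoidAlgebra.coeff_smul, Finsupp.smul_apply, LaurentPolynomial.T_apply, smul_eq_mul,
    mul_ite, mul_one, mul_zero]
  simp only [sub_eq_zero]

lemma coeff_simpleStep_pow_two_mul (k : ℕ) :
    (simpleStep ^ (2 * k)).coeff 0 = k.centralBinom / 4 ^ k := by
  rw [coeff_simpleStep_pow_zero, Finset.sum_eq_single k]
  · rw [if_pos (by push_cast; rfl), Nat.centralBinom, pow_mul]
    norm_num
  · intro m _ hm
    exact if_neg (by omega)
  · exact fun hk ↦ absurd (Finset.mem_range.2 (by omega)) hk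

lemma coeff_simpleStep_pow_two_mul_add_one (k : ℕ) :
    (simpleStep ^ (2 * k + 1)).coeff 0 = 0 := by
  rw [coeff_simpleStep_pow_zero]
  exact Finset.sum_eq_zero fun m _ ↦ if_neg (by omega)

/-- The generating function of the return probabilities of the simple random walk on `ℤ`. -/
noncomputable def returnSeries : ℝ⟦X⟧ := mk fun n ↦ (simpleStep ^ n).coeff 0

lemma constantCoeff_returnSeries : constantCoeff returnSeries = 1 := by
  simp [returnSeries]

lemma coeff_returnSeries_add_two (n : ℕ) :
    (n + 2) * coeff (n + 2) returnSeries = (n + 1) * coeff n returnSeries := by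
  simp only [returnSeries, coeff_mk]
  rcases Nat.even_or_odd' n with ⟨k, rfl | rfl⟩
  · have hsucc : ((k : ℝ) + 1) * (k + 1).centralBinom = 2 * (2 * k + 1) * k.centralBinom :=
      mod_cast Nat.succ_mul_centralBinom_succ k
    rw [show 2 * k + 2 = 2 * (k + 1) by ring, coeff_simpleStep_pow_two_mul,
      coeff_simpleStep_pow_two_mul, pow_succ]
    push_cast
    field_simp
    linear_combination 2 * hsucc
  · rw [show 2 * k + 1 + 2 = 2 * (k + 1) + 1 by ring, coeff_simpleStep_pow_two_mul_add_one,
      coeff_simpleStep_pow_two_mul_add_one, mul_zero, mul_zero]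

lemma derivative_returnSeries :
    (1 - X ^ 2) * derivative ℝ returnSeries = X * returnSeries := by
  ext n
  rcases n with - | - | n
  · have h1 : coeff 1 returnSeries = 0 := by
      rw [returnSeries, coeff_mk]
      exact coeff_simpleStep_pow_two_mul_add_one 0
    rw [sub_mul, one_mul, map_sub, coeff_derivative, zero_add, h1, coeff_X_pow_mul',
      if_neg (by simp), coeff_zero_X_mul, zero_mul, sub_zero]
  · have h := coeff_returnSeries_add_two 0
    rw [sub_mul, one_mul, map_sub, coeff_derivative, zero_add, coeff_X_pow_mul', if_neg (by simp),
      coeff_succ_X_mul]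
    push_cast at h ⊢
    linear_combination h
  · have h := coeff_returnSeries_add_two (n + 1)
    rw [sub_mul, one_mul, map_sub, coeff_derivative, coeff_X_pow_mul (d := n) (n := 2),
      coeff_derivative, coeff_succ_X_mul]
    push_cast at h ⊢
    linear_combination h

lemma returnSeries_sq_mul_one_sub_X_sq : returnSeries ^ 2 * (1 - X ^ 2) = 1 := by
  apply derivative.ext
  · have hD : derivative ℝ (1 - X ^ 2 : ℝ⟦X⟧) = -(2 * X) := by
      rw [map_sub, derivative_one, derivative_pow, derivative_X]
      simp
    rw [derivative_one, Derivation.leibniz, hD, derivative_pow, smul_eq_mul, smul_eq_mul]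
    push_cast
    linear_combination 2 * returnSeries * derivative_returnSeries
  · simp [constantCoeff_returnSeries]

end ReturnProbabilities

section LaurentCoefficients

variable {R : Type*} [Semiring R]

lemma coeff_toLaurent_zero (f : R[X]) : (Polynomial.toLaurent f).coeff 0 = f.coeff 0 := by
  rw [LaurentPolynomial.coeff_toLaurent]
  exact Finsupp.mapDomain_apply Nat.castEmbedding.injective _ 0

lemma coeff_toLaurent_of_neg (f : R[X]) {i : ℤ} (hi : i < 0) :
    (Polynomial.toLaurent f).coeff i = 0 := by
  rw [LaurentPolynomial.coeff_toLaurent]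
  refine Finsupp.mapDomain_of_notMem_range _ _ ?_
  rintro ⟨n, rfl⟩
  exact absurd hi (Int.natCast_nonneg n).not_gt

lemma coeff_toLaurentInv_of_pos (f : ℝ[X]) {i : ℤ} (hi : 0 < i) : (toLaurentInv f).coeff i = 0 := by
  simp only [toLaurentInv, RingHom.comp_apply, RingHom.coe_coe, LaurentPolynomial.invert_apply]
  exact coeff_toLaurent_of_neg f (neg_neg_of_pos hi)

lemma coeff_mul_T (f : R[T;T⁻¹]) (m i : ℤ) :
    (f * LaurentPolynomial.T m).coeff i = f.coeff (i - m) := by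
  rw [LaurentPolynomial.T, AddMonoidAlgebra.coeff_mul_single_apply, mul_one, sub_eq_add_neg]

lemma coeff_laurent_C_mul (a : R) (f : R[T;T⁻¹]) (i : ℤ) :
    (LaurentPolynomial.C a * f).coeff i = a * f.coeff i := by
  rw [← LaurentPolynomial.smul_eq_C_mul, AddMonoidAlgebra.coeff_smul, Finsupp.smul_apply,
    smul_eq_mul]

lemma coeff_finset_sum {ι : Type*} (s : Finset ι) (f : ι → R[T;T⁻¹]) (i : ℤ) :
    (∑ j ∈ s, f j).coeff i = ∑ j ∈ s, (f j).coeff i := by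
  rw [AddMonoidAlgebra.coeff_sum, Finsupp.finsetSum_apply]

lemma coeff_mul_simpleStep (f : ℝ[T;T⁻¹]) (i : ℤ) :
    (f * simpleStep).coeff i = (f.coeff (i - 1) + f.coeff (i + 1)) / 2 := by
  rw [simpleStep, mul_left_comm, coeff_laurent_C_mul, mul_add, AddMonoidAlgebra.coeff_add,
    Finsupp.add_apply, coeff_mul_T, coeff_mul_T, sub_neg_eq_add]
  ring

end LaurentCoefficients

section Factorization

/-- The generating function `1 / √(1 - t² (T + T⁻¹)² / 4)` of the diagonal walks that end on the
horizontal axis, in which `T` marks the abscissa of the endpoint. -/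
noncomputable def axisSeries : ℝ[T;T⁻¹]⟦X⟧ :=
  rescale simpleStep (PowerSeries.map LaurentPolynomial.C returnSeries)

/-- One minus the generating function of the first returns to the half-line, in which `T` marks the
abscissa of the point of return. -/
noncomputable def boundarySeries : ℝ[T;T⁻¹]⟦X⟧ :=
  PowerSeries.map LaurentPolynomial.C cosHalf * PowerSeries.map toLaurentInv kernelRoot

lemma coeff_axisSeries (n : ℕ) : coeff n axisSeries =
    simpleStep ^ n * LaurentPolynomial.C ((simpleStep ^ n).coeff 0) := by
  rw [axisSeries, coeff_rescale, coeff_map, returnSeries, coeff_mk]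

lemma axisSeries_mul_kernelRoot_mul_kernelRoot :
    axisSeries * (PowerSeries.map Polynomial.toLaurent kernelRoot *
      PowerSeries.map toLaurentInv kernelRoot) = 1 := by
  have hsq : axisSeries ^ 2 * (1 - (C simpleStep * X) ^ 2) = 1 := by
    have h := congrArg (fun f ↦ rescale simpleStep (PowerSeries.map LaurentPolynomial.C f))
      returnSeries_sq_mul_one_sub_X_sq
    simpa only [map_mul, map_pow, map_sub, map_one, PowerSeries.map_X, rescale_X, axisSeries]
      using h
  apply eq_of_sq_eq_sq_of_constantCoeff_eq_one
  · rw [map_mul, map_mul, constantCoeff_map, constantCoeff_map, constantCoeff_kernelRoot, map_one,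
      map_one, mul_one, mul_one, ← coeff_zero_eq_constantCoeff_apply, coeff_axisSeries, pow_zero,
      one_mul, AddMonoidAlgebra.coeff_one_zero, map_one]
  · exact map_one _
  · rw [mul_pow, ← one_sub_simpleStep_sq_eq, hsq, one_pow]

lemma coeff_boundarySeries_of_pos (k : ℕ) {i : ℤ} (hi : 0 < i) :
    (coeff k boundarySeries).coeff i = 0 := by
  rw [boundarySeries, coeff_mul, coeff_finset_sum]
  refine Finset.sum_eq_zero fun kl _ ↦ ?_
  rw [coeff_map, coeff_map, coeff_laurent_C_mul, coeff_toLaurentInv_of_pos _ hi, mul_zero]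

lemma exists_boundarySeries_mul_axisSeries_eq : ∃ ρ : ℝ[X]⟦X⟧,
    boundarySeries * axisSeries = PowerSeries.map Polynomial.toLaurent ρ ∧
      PowerSeries.map (Polynomial.evalRingHom 0) ρ = 1 := by
  have hinv : kernelRoot * invOfUnit kernelRoot 1 = 1 :=
    mul_invOfUnit _ _ (by rw [constantCoeff_kernelRoot, Units.val_one])
  have hC : (Polynomial.toLaurent (R := ℝ)).comp Polynomial.C = LaurentPolynomial.C :=
    RingHom.ext Polynomial.toLaurent_C
  have hC0 : (Polynomial.evalRingHom (0 : ℝ)).comp Polynomial.C = RingHom.id ℝ := by ext; simp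
  refine ⟨PowerSeries.map Polynomial.C cosHalf * invOfUnit kernelRoot 1, ?_, ?_⟩
  · have h := congrArg (PowerSeries.map Polynomial.toLaurent) hinv
    rw [map_mul, map_one] at h
    rw [map_mul, ← RingHom.comp_apply, ← map_comp, hC, boundarySeries]
    linear_combination PowerSeries.map LaurentPolynomial.C cosHalf *
      (PowerSeries.map Polynomial.toLaurent (invOfUnit kernelRoot 1) *
        axisSeries_mul_kernelRoot_mul_kernelRoot -
        axisSeries * PowerSeries.map toLaurentInv kernelRoot * h)
  · rw [map_mul, ← RingHom.comp_apply, ← map_comp, hC0, PowerSeries.map_id, id_eq,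
      ← map_eval_zero_kernelRoot, ← map_mul, hinv, map_one]

lemma coeff_boundarySeries_mul_axisSeries (n : ℕ) {i : ℤ} (hi : i ≤ 0) :
    (coeff n (boundarySeries * axisSeries)).coeff i = if n = 0 ∧ i = 0 then 1 else 0 := by
  obtain ⟨ρ, hρ, hρ0⟩ := exists_boundarySeries_mul_axisSeries_eq
  rw [hρ, coeff_map]
  rcases hi.lt_or_eq with hneg | rfl
  · rw [coeff_toLaurent_of_neg _ hneg, if_neg (by omega)]
  · have h := congrArg (coeff n) hρ0
    rw [coeff_map, Polynomial.coe_evalRingHom, ← Polynomial.coeff_zero_eq_eval_zero, coeff_one] at h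
    rw [coeff_toLaurent_zero, h]
    simp only [and_true]

end Factorization

section Weights

/-- The coefficient of `t ^ n` at the point `p` in the quotient of `boundarySeries` by the kernel
`1 - t (T + T⁻¹) (U + U⁻¹) / 4`: the probability that a uniform diagonal walk of length `n` stays on
the slit plane and ends at `p`. -/
noncomputable def slitWeight (n : ℕ) (p : ℤ × ℤ) : ℝ :=
  ∑ kl ∈ Finset.HasAntidiagonal.antidiagonal n,
    (coeff kl.1 boundarySeries * simpleStep ^ kl.2).coeff p.1 * (simpleStep ^ kl.2).coeff p.2

/-- `diagSteps` as a finset. -/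
def diagStepFinset : Finset (ℤ × ℤ) := {(1, 1), (1, -1), (-1, 1), (-1, -1)}

lemma slitWeight_of_mem_slitH (n : ℕ) {p : ℤ × ℤ} (hp : p ∈ slitH) :
    slitWeight n p = if n = 0 ∧ p = 0 then 1 else 0 := by
  obtain ⟨i, j⟩ := p
  obtain ⟨rfl : j = 0, hi : i ≤ 0⟩ := hp
  have h : slitWeight n (i, 0) = (coeff n (boundarySeries * axisSeries)).coeff i := by
    rw [slitWeight, coeff_mul, coeff_finset_sum]
    refine Finset.sum_congr rfl fun kl _ ↦ ?_
    rw [coeff_axisSeries, ← mul_assoc, mul_comm _ (LaurentPolynomial.C _), coeff_laurent_C_mul,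
      mul_comm]
  rw [h, coeff_boundarySeries_mul_axisSeries n hi]
  simp only [Prod.mk_eq_zero, and_true]

lemma boundary_term_eq_zero (k : ℕ) {p : ℤ × ℤ} (hp : p ∉ slitH) :
    (coeff k boundarySeries * simpleStep ^ 0).coeff p.1 * (simpleStep ^ 0).coeff p.2 = 0 := by
  rw [pow_zero, mul_one]
  by_cases hy : p.2 = 0
  · rw [coeff_boundarySeries_of_pos k (not_le.1 fun hx ↦ hp ⟨hy, hx⟩), zero_mul]
  · rw [← LaurentPolynomial.T_zero, LaurentPolynomial.T_apply, if_neg (Ne.symm hy), mul_zero]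

lemma slitWeight_zero_of_notMem_slitH {p : ℤ × ℤ} (hp : p ∉ slitH) : slitWeight 0 p = 0 := by
  rw [slitWeight, Finset.Nat.antidiagonal_zero, Finset.sum_singleton]
  exact boundary_term_eq_zero 0 hp

lemma slitWeight_succ (n : ℕ) {p : ℤ × ℤ} (hp : p ∉ slitH) :
    slitWeight (n + 1) p = (∑ s ∈ diagStepFinset, slitWeight n (p - s)) / 4 := by
  rw [slitWeight, Finset.Nat.sum_antidiagonal_succ', boundary_term_eq_zero (n + 1) hp, zero_add]
  simp only [slitWeight, pow_succ, ← mul_assoc, coeff_mul_simpleStep]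
  rw [Finset.sum_comm, Finset.sum_div]
  refine Finset.sum_congr rfl fun kl _ ↦ ?_
  simp only [diagStepFinset, Prod.fst_sub, Prod.snd_sub, Finset.mem_insert, Prod.mk.injEq,
    reduceCtorEq, and_false, and_true, Finset.mem_singleton, and_self, or_self, not_false_eq_true,
    Finset.sum_insert, sub_neg_eq_add, Finset.sum_singleton]
  ring

end Weights

section Counting

variable (A : Finset (ℤ × ℤ)) (n : ℕ)

/-- The walks on the slit plane with steps in `A`, of length `n`, that end at `p`. -/
def SlitWalkTo (p : ℤ × ℤ) : Type :=
  {w : Fin (n + 1) → ℤ × ℤ // IsSlitWalk A n w ∧ w (Fin.last n) = p}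

instance finite_isSlitWalk : Finite {w : Fin (n + 1) → ℤ × ℤ // IsSlitWalk A n w} := by
  let steps (w : {w : Fin (n + 1) → ℤ × ℤ // IsSlitWalk A n w}) (m : Fin n) : A :=
    ⟨w.1 m.succ - w.1 m.castSucc, w.2.2.1 m⟩
  refine Finite.of_injective steps fun v w hvw ↦ Subtype.ext (funext fun i ↦ ?_)
  induction i using Fin.induction with
  | zero => rw [v.2.1, w.2.1]
  | succ m ih =>
    have hstep : v.1 m.succ - v.1 m.castSucc = w.1 m.succ - w.1 m.castSucc :=
      congrArg Subtype.val (congrFun hvw m)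
    rwa [ih, sub_left_inj] at hstep

instance finite_slitWalkTo (p : ℤ × ℤ) : Finite (SlitWalkTo A n p) :=
  Finite.of_injective
    (fun w : SlitWalkTo A n p ↦ (⟨w.1, w.2.1⟩ : {w // IsSlitWalk A n w}))
    fun _ _ h ↦ Subtype.ext (congrArg (fun w ↦ w.1) h)

variable {A n}

lemma isSlitWalk_succ_iff {w : Fin (n + 2) → ℤ × ℤ} :
    IsSlitWalk A (n + 1) w ↔ IsSlitWalk A n (Fin.init w) ∧
      w (Fin.last (n + 1)) - Fin.init w (Fin.last n) ∈ A ∧ w (Fin.last (n + 1)) ∉ slitH := by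
  simp only [IsSlitWalk, Fin.forall_fin_succ' (n := n), Fin.forall_fin_succ' (n := n + 1), Fin.init,
    Fin.succ_castSucc, Fin.succ_last, Fin.castSucc_zero, Finset.mem_coe, Fin.val_castSucc,
    Fin.val_last, Nat.le_add_left, forall_const]
  tauto

lemma sigma_slitWalkTo_ext {p : ℤ × ℤ} {x y : Σ s : A, SlitWalkTo A n (p - s)}
    (h : x.2.1 = y.2.1) : x = y := by
  obtain ⟨⟨s, hs⟩, w, hw, hws⟩ := x
  obtain ⟨⟨r, hr⟩, v, hv, hvr⟩ := y
  obtain rfl : w = v := h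
  obtain rfl : s = r := sub_right_injective (hws.symm.trans hvr)
  rfl

/-- A walk that ends at `p` off the half-line is a last step `s` after a walk that ends at
`p - s`. -/
def slitWalkToSuccEquiv {p : ℤ × ℤ} (hp : p ∉ slitH) :
    SlitWalkTo A (n + 1) p ≃ Σ s : A, SlitWalkTo A n (p - s) where
  toFun w := ⟨⟨p - Fin.init w.1 (Fin.last n), by
      simpa only [w.2.2] using (isSlitWalk_succ_iff.1 w.2.1).2.1⟩,
    ⟨Fin.init w.1, (isSlitWalk_succ_iff.1 w.2.1).1, (sub_sub_cancel _ _).symm⟩⟩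
  invFun x := ⟨Fin.snoc (α := fun _ ↦ ℤ × ℤ) x.2.1 p, isSlitWalk_succ_iff.2 (by
      rw [Fin.init_snoc, Fin.snoc_last, x.2.2.2, sub_sub_cancel]
      exact ⟨x.2.2.1, x.1.2, hp⟩), Fin.snoc_last _ _⟩
  left_inv w := Subtype.ext (by simpa only [w.2.2] using Fin.snoc_init_self w.1)
  right_inv x := sigma_slitWalkTo_ext (Fin.init_snoc (α := fun _ ↦ ℤ × ℤ) p x.2.1)

lemma card_slitWalkTo_succ {p : ℤ × ℤ} (hp : p ∉ slitH) :
    Nat.card (SlitWalkTo A (n + 1) p) = ∑ s ∈ A, Nat.card (SlitWalkTo A n (p - s)) := by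
  rw [Nat.card_congr (slitWalkToSuccEquiv hp), Nat.card_sigma,
    Finset.sum_coe_sort A fun s ↦ Nat.card (SlitWalkTo A n (p - s))]

lemma card_slitWalkTo_succ_of_mem_slitH {p : ℤ × ℤ} (hp : p ∈ slitH) :
    Nat.card (SlitWalkTo A (n + 1) p) = 0 := by
  have : IsEmpty (SlitWalkTo A (n + 1) p) :=
    ⟨fun w ↦ (isSlitWalk_succ_iff.1 w.2.1).2.2 (by rw [w.2.2]; exact hp)⟩
  exact Nat.card_of_isEmpty

lemma isSlitWalk_zero_iff {w : Fin 1 → ℤ × ℤ} : IsSlitWalk A 0 w ↔ w 0 = 0 :=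
  ⟨fun hw ↦ hw.1, fun hw ↦ ⟨hw, fun m ↦ m.elim0, fun m hm ↦ absurd m.2 (by omega)⟩⟩

lemma card_slitWalkTo_zero (p : ℤ × ℤ) :
    Nat.card (SlitWalkTo A 0 p) = if p = 0 then 1 else 0 := by
  split_ifs with hp
  · rw [Nat.card_eq_one_iff_unique]
    refine ⟨⟨fun v w ↦ Subtype.ext (funext fun i ↦ ?_)⟩,
      ⟨⟨fun _ ↦ 0, isSlitWalk_zero_iff.2 rfl, hp.symm⟩⟩⟩
    rw [Fin.fin_one_eq_zero i, isSlitWalk_zero_iff.1 v.2.1, isSlitWalk_zero_iff.1 w.2.1]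
  · have : IsEmpty (SlitWalkTo A 0 p) :=
      ⟨fun w ↦ hp (w.2.2.symm.trans (isSlitWalk_zero_iff.1 w.2.1))⟩
    exact Nat.card_of_isEmpty

variable (A n)

lemma hasSum_card_slitWalkTo :
    HasSum (fun p ↦ (Nat.card (SlitWalkTo A n p) : ℝ)) (slitTotal A n) := by
  classical
  let W := {w : Fin (n + 1) → ℤ × ℤ // IsSlitWalk A n w}
  have := Fintype.ofFinite W
  have hfiber (p : ℤ × ℤ) : (Nat.card (SlitWalkTo A n p) : ℝ) =
      ∑ w : W, if p = w.1 (Fin.last n) then 1 else 0 := by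
    have e : SlitWalkTo A n p ≃ {w : W // w.1 (Fin.last n) = p} :=
      (Equiv.subtypeSubtypeEquivSubtypeInter _ _).symm
    simp only [Nat.card_congr e, Nat.card_eq_fintype_card, Fintype.card_subtype, Finset.sum_boole,
      eq_comm]
  have htotal : (slitTotal A n : ℝ) = ∑ _w : W, (1 : ℝ) := by
    simp only [slitTotal, Nat.card_eq_fintype_card, Finset.sum_const, Finset.card_univ,
      nsmul_eq_mul, mul_one, W]
  simp only [hfiber, htotal]
  exact hasSum_sum fun w _ ↦ hasSum_ite_eq (w.1 (Fin.last n)) 1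

end Counting

section ClosedForm

lemma card_slitWalkTo_diagStepFinset (n : ℕ) (p : ℤ × ℤ) :
    (Nat.card (SlitWalkTo diagStepFinset n p) : ℝ) = 4 ^ n * slitWeight n p := by
  induction n generalizing p with
  | zero =>
    by_cases hp : p ∈ slitH
    · simp only [card_slitWalkTo_zero, slitWeight_of_mem_slitH 0 hp, true_and, pow_zero, one_mul,
        Nat.cast_ite, Nat.cast_one, Nat.cast_zero]
    · have hp0 : p ≠ 0 := fun h ↦ hp (h ▸ ⟨rfl, le_rfl⟩)
      rw [card_slitWalkTo_zero, if_neg hp0, slitWeight_zero_of_notMem_slitH hp, Nat.cast_zero,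
        mul_zero]
  | succ n ih =>
    by_cases hp : p ∈ slitH
    · rw [card_slitWalkTo_succ_of_mem_slitH hp, slitWeight_of_mem_slitH _ hp,
        if_neg fun h ↦ n.succ_ne_zero h.1, Nat.cast_zero, mul_zero]
    · rw [card_slitWalkTo_succ hp, slitWeight_succ n hp, Nat.cast_sum, pow_succ, mul_assoc,
        mul_div_cancel₀ _ four_ne_zero, Finset.mul_sum]
      exact Finset.sum_congr rfl fun s _ ↦ ih (p - s)

/-- Evaluation of Laurent polynomials at `T = 1`. -/
noncomputable def evalOne : ℝ[T;T⁻¹] →+* ℝ := LaurentPolynomial.eval₂ (RingHom.id ℝ) 1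

lemma hasSum_coeff (f : ℝ[T;T⁻¹]) : HasSum f.coeff (evalOne f) := by
  induction f using LaurentPolynomial.induction_on' with
  | add f g hf hg =>
    rw [map_add, AddMonoidAlgebra.coeff_add, Finsupp.coe_add]
    exact hf.add hg
  | C_mul_T n a =>
    have hval : evalOne (LaurentPolynomial.C a * LaurentPolynomial.T n) = a := by
      rw [evalOne, LaurentPolynomial.eval₂_C_mul_T, one_zpow, Units.val_one, mul_one,
        RingHom.id_apply]
    rw [hval]
    convert! hasSum_single n fun m hm ↦ ?_
    · rw [coeff_laurent_C_mul, LaurentPolynomial.T_apply, if_pos rfl, mul_one]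
    · rw [coeff_laurent_C_mul, LaurentPolynomial.T_apply, if_neg hm.symm, mul_zero]

lemma evalOne_simpleStep : evalOne simpleStep = 1 := by
  simp [simpleStep, evalOne, one_add_one_eq_two]

lemma evalOne_boundarySeries : PowerSeries.map evalOne boundarySeries =
    cosHalf * (binomialPow 1 (1 / 4) * binomialPow (-1) (1 / 4)) := by
  have hC : evalOne.comp LaurentPolynomial.C = RingHom.id ℝ := by ext; simp [evalOne]
  have hroot : evalOne.comp toLaurentInv = Polynomial.evalRingHom 1 := by
    apply Polynomial.ringHom_ext <;> simp [toLaurentInv, evalOne]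
  rw [boundarySeries, map_mul, ← map_eval_one_kernelRoot, ← hroot, map_comp, RingHom.comp_apply,
    ← RingHom.comp_apply, ← map_comp, hC, PowerSeries.map_id, id_eq]

lemma hasSum_slitWeight (n : ℕ) : HasSum (slitWeight n)
    (coeff n (PowerSeries.map evalOne boundarySeries * mk 1)) := by
  rw [coeff_mul]
  refine hasSum_sum fun kl _ ↦ ?_
  set f := coeff kl.1 boundarySeries * simpleStep ^ kl.2 with hf
  set g := simpleStep ^ kl.2 with hg
  have hval : coeff kl.1 (PowerSeries.map evalOne boundarySeries) * coeff kl.2 (mk 1) =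
      evalOne f * evalOne g := by
    simp [hf, hg, evalOne_simpleStep]
  rw [hval]
  refine (hasSum_coeff f).mul (hasSum_coeff g)
    (summable_of_ne_finset_zero (s := f.coeff.support ×ˢ g.coeff.support) fun p hp ↦ ?_)
  rwa [Finset.mem_product, Finsupp.mem_support_iff, Finsupp.mem_support_iff, ← mul_ne_zero_iff,
    not_not] at hp

/-- The series `((1 + t) / (1 - t)) ^ α`. -/
noncomputable def ratioPow (α : ℝ) : ℝ⟦X⟧ := binomialPow 1 α * binomialPow (-1) (-α)

theorem slitTotal_diagSteps (n : ℕ) : (slitTotal diagSteps n : ℝ) =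
    4 ^ n * ((coeff n (ratioPow (1 / 4)) + coeff n (ratioPow (3 / 4))) / 2) := by
  have hsteps : diagSteps = diagStepFinset := by simp [diagSteps, diagStepFinset]
  have hseries : PowerSeries.map evalOne boundarySeries * mk 1 =
      C (1 / 2) * (ratioPow (1 / 4) + ratioPow (3 / 4)) := by
    have hpos (a b c : ℝ) (h : a + b = c) :
        binomialPow 1 a * binomialPow 1 b = binomialPow 1 c := by rw [← binomialPow_add, h]
    have hneg (a b c : ℝ) (h : a + b = c) :
        binomialPow (-1) a * binomialPow (-1) b = binomialPow (-1) c := by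
      rw [← binomialPow_add, h]
    rw [evalOne_boundarySeries, mk_one_eq_binomialPow, cosHalf, ratioPow, ratioPow,
      ← hpos (1 / 2) (1 / 4) (3 / 4) (by norm_num), ← hneg (1 / 4) (-1) (-(3 / 4)) (by norm_num),
      ← hneg (1 / 2) (-(3 / 4)) (-(1 / 4)) (by norm_num),
      ← hneg (1 / 4) (-1) (-(3 / 4)) (by norm_num)]
    ring
  have hcount := hasSum_card_slitWalkTo diagStepFinset n
  simp only [card_slitWalkTo_diagStepFinset] at hcount
  rw [hsteps, hcount.unique ((hasSum_slitWeight n).mul_left _), hseries,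
    coeff_C_mul, map_add]
  ring

end ClosedForm

section Transfer

variable {u v : ℕ → ℝ} {a s L : ℝ}

lemma tendsto_mul_add_rpow (b c : ℝ)
    (hu : Tendsto (fun n : ℕ ↦ u n * (n + b) ^ s) atTop (nhds L)) :
    Tendsto (fun n : ℕ ↦ u n * (n + c) ^ s) atTop (nhds L) := by
  have hratio : Tendsto (fun n : ℕ ↦ ((c + 1 * n) / (b + 1 * n) : ℝ) ^ s) atTop (nhds 1) := by
    simpa using (tendsto_add_mul_div_add_mul_atTop_nhds c b 1 one_ne_zero).rpow_const
      (p := s) (Or.inl (by norm_num))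
  rw [← mul_one L]
  refine (hu.mul hratio).congr' ?_
  have hpos (d : ℝ) : ∀ᶠ n : ℕ in atTop, 0 < n + d :=
    (tendsto_atTop_add_const_right _ d tendsto_natCast_atTop_atTop).eventually_gt_atTop 0
  filter_upwards [hpos b, hpos c] with n hb hc
  rw [one_mul, add_comm c, add_comm b, Real.div_rpow hc.le hb.le, mul_assoc,
    mul_div_cancel₀ _ (Real.rpow_pos_of_pos hb s).ne']

lemma tendsto_mul_add_one_rpow_of_lt {b : ℝ} (hsb : s < b)
    (hu : Tendsto (fun n : ℕ ↦ u n * (n + 1) ^ b) atTop (nhds L)) :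
    Tendsto (fun n : ℕ ↦ u n * (n + 1) ^ s) atTop (nhds 0) := by
  have hpow : Tendsto (fun n : ℕ ↦ ((n : ℝ) + 1) ^ (-(b - s))) atTop (nhds 0) :=
    (tendsto_rpow_neg_atTop (sub_pos.2 hsb)).comp
      (tendsto_atTop_add_const_right _ 1 tendsto_natCast_atTop_atTop)
  rw [← mul_zero L]
  refine (hu.mul hpow).congr fun n ↦ ?_
  rw [mul_assoc, ← Real.rpow_add (by positivity)]
  congr 2
  ring

lemma exists_abs_mul_rpow_le (hu : Tendsto (fun n : ℕ ↦ u n * (n + 1) ^ s) atTop (nhds L)) :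
    ∃ K, ∀ n : ℕ, |u n| * (n + 1) ^ s ≤ K := by
  obtain ⟨K, hK⟩ := hu.abs.bddAbove_range
  refine ⟨K, fun n ↦ ?_⟩
  have h := hK (Set.mem_range_self n)
  rwa [abs_mul, abs_of_nonneg (Real.rpow_nonneg (by positivity) s)] at h

lemma summable_add_one_rpow (ha : 1 < a) : Summable fun n : ℕ ↦ ((n : ℝ) + 1) ^ (-a) := by
  simpa only [Nat.cast_add, Nat.cast_one] using
    (summable_nat_add_iff 1).2 (Real.summable_nat_rpow.2 (neg_lt_neg ha))

lemma summable_abs_mul_rpow (ha : 1 < a)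
    (hu : Tendsto (fun n : ℕ ↦ u n * (n + 1) ^ s) atTop (nhds L)) :
    Summable fun n : ℕ ↦ |u n| * ((n : ℝ) + 1) ^ (s - a) := by
  obtain ⟨K, hK⟩ := exists_abs_mul_rpow_le hu
  refine Summable.of_nonneg_of_le (fun n ↦ by positivity) (fun n ↦ ?_)
    ((summable_add_one_rpow ha).mul_left K)
  rw [sub_eq_add_neg, Real.rpow_add (by positivity), ← mul_assoc]
  exact mul_le_mul_of_nonneg_right (hK n) (by positivity)

lemma summable_of_tendsto_mul_rpow (ha : 1 < a)
    (hu : Tendsto (fun n : ℕ ↦ u n * (n + 1) ^ a) atTop (nhds L)) : Summable u :=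
  .of_abs (by simpa using summable_abs_mul_rpow ha hu)

lemma abs_sub_mul_rpow_le {K : ℝ} (hs : 0 ≤ s) (hK : ∀ n : ℕ, |u n| * (n + 1) ^ s ≤ K) {n k : ℕ}
    (hk : k ≤ n - k) : |u (n - k)| * ((n : ℝ) + 1) ^ s ≤ 2 ^ s * K := by
  have hn : (n : ℝ) + 1 ≤ 2 * ((n - k : ℕ) + 1) := by
    exact_mod_cast (by omega : n + 1 ≤ 2 * (n - k + 1))
  calc |u (n - k)| * ((n : ℝ) + 1) ^ s
      ≤ |u (n - k)| * (2 * ((n - k : ℕ) + 1)) ^ s := by gcongr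
    _ = 2 ^ s * (|u (n - k)| * ((n - k : ℕ) + 1) ^ s) := by
        rw [Real.mul_rpow zero_le_two (by positivity)]
        ring
    _ ≤ 2 ^ s * K := by gcongr; exact hK _

lemma tendsto_sum_antidiagonal_le (hs : 0 ≤ s) (hv : Summable v)
    (hu : Tendsto (fun n : ℕ ↦ u n * (n + 1) ^ s) atTop (nhds L)) :
    Tendsto (fun n : ℕ ↦ (∑ p ∈ Finset.HasAntidiagonal.antidiagonal n with p.1 ≤ p.2,
      v p.1 * u p.2) * ((n : ℝ) + 1) ^ s) atTop (nhds ((∑' k, v k) * L)) := by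
  obtain ⟨K, hK⟩ := exists_abs_mul_rpow_le hu
  let term (n k : ℕ) : ℝ := if k ≤ n - k then v k * u (n - k) * ((n : ℝ) + 1) ^ s else 0
  have hsum (n : ℕ) : ∑' k, term n k =
      (∑ p ∈ Finset.HasAntidiagonal.antidiagonal n with p.1 ≤ p.2, v p.1 * u p.2) *
        ((n : ℝ) + 1) ^ s := by
    rw [Finset.sum_mul, Finset.sum_filter, Finset.Nat.sum_antidiagonal_eq_sum_range_succ_mk]
    refine tsum_eq_sum fun k hk ↦ if_neg ?_
    rw [Finset.mem_range] at hk
    omega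
  simp only [← hsum, ← tsum_mul_right]
  refine tendsto_tsum_of_dominated_convergence (bound := fun k ↦ |v k| * (2 ^ s * K))
    (hv.abs.mul_right _) (fun k ↦ ?_) (Eventually.of_forall fun n k ↦ ?_)
  · have hshift : Tendsto (fun m : ℕ ↦ v k * (u m * ((m : ℝ) + (k + 1)) ^ s)) atTop
        (nhds (v k * L)) := (tendsto_mul_add_rpow 1 (k + 1) hu).const_mul (v k)
    refine (hshift.comp (tendsto_sub_atTop_nat k)).congr' ?_
    filter_upwards [eventually_ge_atTop (2 * k)] with n hn
    have hcast : ((n - k : ℕ) : ℝ) + (k + 1) = n + 1 := by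
      rw [Nat.cast_sub (by omega)]
      ring
    rw [Function.comp_apply, hcast, ← mul_assoc]
    exact (if_pos (by omega)).symm
  · rw [Real.norm_eq_abs]
    by_cases hk : k ≤ n - k
    · rw [show term n k = _ from if_pos hk, abs_mul, abs_mul, mul_assoc,
        abs_of_nonneg (Real.rpow_nonneg (by positivity : (0 : ℝ) ≤ n + 1) s)]
      exact mul_le_mul_of_nonneg_left (abs_sub_mul_rpow_le hs hK hk) (abs_nonneg _)
    · rw [show term n k = 0 from if_neg hk, abs_zero]
      have hK0 : 0 ≤ K := (by positivity : (0 : ℝ) ≤ |u 0| * ((0 : ℕ) + 1) ^ s).trans (hK 0)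
      positivity

-- The factor `(n + 1) ^ (s - a)` is handed over to the terms of small index, now those of `u`, so
-- that `tendsto_sum_antidiagonal_le` applies to this half as well.
lemma abs_sum_antidiagonal_gt_le (hsa : s ≤ a) (n : ℕ) :
    |(∑ p ∈ Finset.HasAntidiagonal.antidiagonal n with ¬p.1 ≤ p.2, v p.1 * u p.2) *
        ((n : ℝ) + 1) ^ s| ≤
      (∑ p ∈ Finset.HasAntidiagonal.antidiagonal n with p.1 ≤ p.2,
        |u p.1| * ((p.1 : ℝ) + 1) ^ (s - a) * |v p.2|) * ((n : ℝ) + 1) ^ a := by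
  have hterm : ∀ p ∈ Finset.HasAntidiagonal.antidiagonal n,
      |v p.1| * |u p.2| * ((n : ℝ) + 1) ^ s ≤
        |u p.2| * ((p.2 : ℝ) + 1) ^ (s - a) * |v p.1| * ((n : ℝ) + 1) ^ a := by
    intro p hp
    have hpn : (p.2 : ℝ) ≤ n := mod_cast Finset.HasAntidiagonal.antidiagonal.snd_le hp
    calc |v p.1| * |u p.2| * ((n : ℝ) + 1) ^ s
        = |u p.2| * ((n : ℝ) + 1) ^ (s - a) * |v p.1| * ((n : ℝ) + 1) ^ a := by
          rw [← sub_add_cancel s a, Real.rpow_add (by positivity), sub_add_cancel]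
          ring
      _ ≤ _ := by
          gcongr ?_ * ?_ * ?_ * ?_
          exact Real.rpow_le_rpow_of_nonpos (by positivity) (by linarith) (sub_nonpos.2 hsa)
  calc _ ≤ ∑ p ∈ Finset.HasAntidiagonal.antidiagonal n with ¬p.1 ≤ p.2,
        |v p.1| * |u p.2| * ((n : ℝ) + 1) ^ s := by
        rw [Finset.sum_mul]
        refine (Finset.abs_sum_le_sum_abs _ _).trans_eq (Finset.sum_congr rfl fun p _ ↦ ?_)
        rw [abs_mul, abs_mul, abs_of_nonneg (Real.rpow_nonneg (by positivity) s)]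
    _ ≤ ∑ p ∈ Finset.HasAntidiagonal.antidiagonal n with p.2 ≤ p.1,
        |u p.2| * ((p.2 : ℝ) + 1) ^ (s - a) * |v p.1| * ((n : ℝ) + 1) ^ a := by
        refine (Finset.sum_le_sum fun p hp ↦ hterm p (Finset.mem_filter.1 hp).1).trans
          (Finset.sum_le_sum_of_subset_of_nonneg
            (Finset.monotone_filter_right _ fun p _ hp ↦ (not_le.1 hp).le) fun p _ _ ↦ ?_)
        positivity
    _ = _ := by
        rw [Finset.sum_filter, ← Finset.Nat.sum_antidiagonal_swap, ← Finset.sum_filter,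
          Finset.sum_mul]
        rfl

lemma tendsto_coeff_mul {f g : ℝ⟦X⟧} (hs : 0 ≤ s) (hsa : s ≤ a) (ha : 1 < a)
    (hf : Tendsto (fun n : ℕ ↦ coeff n f * (n + 1) ^ a) atTop (nhds 0))
    (hg : Tendsto (fun n : ℕ ↦ coeff n g * (n + 1) ^ s) atTop (nhds L)) :
    Tendsto (fun n : ℕ ↦ coeff n (f * g) * (n + 1) ^ s) atTop
      (nhds ((∑' k, coeff k f) * L)) := by
  have hmain := tendsto_sum_antidiagonal_le hs (summable_of_tendsto_mul_rpow ha hf) hg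
  have habs : Tendsto (fun n : ℕ ↦ |coeff n f| * ((n : ℝ) + 1) ^ a) atTop (nhds 0) := by
    refine (abs_zero (α := ℝ) ▸ hf.abs).congr fun n ↦ ?_
    rw [abs_mul, abs_of_nonneg (Real.rpow_nonneg (by positivity) a)]
  have htail := squeeze_zero_norm (fun n ↦ (Real.norm_eq_abs _).trans_le
    (abs_sum_antidiagonal_gt_le (u := fun k ↦ coeff k g) (v := fun k ↦ coeff k f) hsa n))
    (by simpa using tendsto_sum_antidiagonal_le (by linarith) (summable_abs_mul_rpow ha hg) habs)
  refine (add_zero (_ * L) ▸ hmain.add htail).congr fun n ↦ ?_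
  rw [← add_mul, Finset.sum_filter_add_sum_filter_not, coeff_mul]

end Transfer

section BinomialAsymptotics

lemma factorial_mul_coeff_binomialPow_neg_one (x : ℝ) (n : ℕ) :
    n.factorial * coeff n (binomialPow (-1) (-x)) = ∏ j ∈ Finset.range n, (x + j) := by
  have hprod : (ascPochhammer ℝ n).eval x = ∏ j ∈ Finset.range n, (x + j) := by
    induction n with
    | zero => rw [ascPochhammer_zero, Polynomial.eval_one, Finset.prod_range_zero]
    | succ n ih => rw [ascPochhammer_succ_eval, ih, Finset.prod_range_succ]
  rw [coeff_binomialPow, Ring.choose_neg', ← hprod, ← Polynomial.ascPochhammer_smeval_eq_eval,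
    ← Ring.factorial_nsmul_multichoose_eq_ascPochhammer, nsmul_eq_mul, Units.smul_def]
  simp [← mul_assoc, ← mul_pow]

lemma tendsto_coeff_binomialPow_neg_one {x : ℝ} (hx : ∀ m : ℕ, x ≠ -m) :
    Tendsto (fun n : ℕ ↦ coeff n (binomialPow (-1) (-x)) * (n + 1) ^ (1 - x)) atTop
      (nhds (Real.Gamma x)⁻¹) := by
  have hlim := (tendsto_natCast_div_add_atTop x).mul
    ((Real.GammaSeq_tendsto_Gamma x).inv₀ (Real.Gamma_ne_zero hx))
  rw [one_mul] at hlim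
  refine tendsto_mul_add_rpow 0 1 (hlim.congr' ?_)
  filter_upwards [eventually_gt_atTop 0] with n hn
  have hn' : (0 : ℝ) < n := mod_cast hn
  have hxn : x + n ≠ 0 := fun h ↦ hx n (by linarith)
  have hpow : (n : ℝ) ^ x ≠ 0 := (Real.rpow_pos_of_pos hn' x).ne'
  rw [Real.GammaSeq, Finset.prod_range_succ, ← factorial_mul_coeff_binomialPow_neg_one, add_zero,
    Real.rpow_sub hn', Real.rpow_one, add_comm (n : ℝ) x]
  field_simp

lemma tsum_coeff_binomialPow_one {α : ℝ} (h : Summable fun k ↦ coeff k (binomialPow 1 α)) :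
    ∑' k, coeff k (binomialPow 1 α) = 2 ^ α := by
  have habel := Real.tendsto_tsum_powerSeries_nhdsWithin_lt h.hasSum.tendsto_sum_nat
  have hrpow : Tendsto (fun x : ℝ ↦ (1 + x) ^ α) (nhdsWithin 1 (Set.Iio 1)) (nhds (2 ^ α)) := by
    have hcont : ContinuousAt (fun x : ℝ ↦ (1 + x) ^ α) 1 :=
      (continuousAt_const.add continuousAt_id).rpow_const (Or.inl (by norm_num))
    simpa [one_add_one_eq_two] using hcont.tendsto.mono_left nhdsWithin_le_nhds
  refine tendsto_nhds_unique habel (hrpow.congr' ?_)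
  filter_upwards [Ioo_mem_nhdsLT (zero_lt_one (α := ℝ))] with x hx
  have hsum := (Real.one_add_rpow_hasFPowerSeriesOnBall_zero (a := α)).hasSum (y := x)
    (by simpa [enorm_eq_nnnorm, ← NNReal.coe_lt_coe, abs_of_pos hx.1] using hx.2)
  rw [zero_add] at hsum
  rw [← hsum.tsum_eq]
  simp [-FormalMultilinearSeries.apply_eq_prod_smul_coeff, _root_.binomialSeries_apply,
    coeff_binomialPow]

theorem tendsto_coeff_ratioPow {α : ℝ} (h0 : 0 < α) (h1 : α < 1) :
    Tendsto (fun n : ℕ ↦ coeff n (ratioPow α) * (n + 1) ^ (1 - α)) atTop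
      (nhds (2 ^ α / Real.Gamma α)) := by
  have hα (m : ℕ) : α ≠ -m := by have := m.cast_nonneg (α := ℝ); linarith
  have hnegα (m : ℕ) : -α ≠ -m := by
    rw [Ne, neg_inj]
    rcases m with - | m
    · simpa using h0.ne'
    · push_cast; have := m.cast_nonneg (α := ℝ); linarith
  have hf : Tendsto (fun n : ℕ ↦ coeff n (binomialPow 1 α) * (n + 1) ^ (1 + α / 2)) atTop
      (nhds 0) := by
    have h := tendsto_mul_add_one_rpow_of_lt (by linarith : 1 + α / 2 < 1 - -α)
      (tendsto_coeff_binomialPow_neg_one hnegα)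
    rw [tendsto_zero_iff_norm_tendsto_zero] at h ⊢
    refine h.congr fun n ↦ ?_
    simp [coeff_binomialPow]
  have hsummable : Summable fun k ↦ coeff k (binomialPow 1 α) :=
    summable_of_tendsto_mul_rpow (by linarith) hf
  rw [← tsum_coeff_binomialPow_one hsummable, div_eq_mul_inv]
  exact tendsto_coeff_mul (a := 1 + α / 2) (by linarith) (by linarith) (by linarith) hf
    (tendsto_coeff_binomialPow_neg_one hα)

end BinomialAsymptotics

end DiagonalSlit

open DiagonalSlit

/-- for diagonal steps, `a(n) ∼ (1/(2^{1/4}Γ(3/4))) · 4ⁿ · n^{−1/4}`. -/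
theorem diag_slit_plane_asymptotics :
    Tendsto (fun n : ℕ =>
        (slitTotal diagSteps n : ℝ) /
          (1 / ((2 : ℝ) ^ ((1 : ℝ)/4) * Real.Gamma (3/4))
            * 4 ^ n * (n : ℝ) ^ (-(1/4 : ℝ))))
      atTop (nhds 1) := by
  have hdominant := tendsto_coeff_ratioPow (α := 3 / 4) (by norm_num) (by norm_num)
  have hminor := tendsto_mul_add_one_rpow_of_lt (by norm_num : (1 - 3 / 4 : ℝ) < 1 - 1 / 4)
    (tendsto_coeff_ratioPow (α := 1 / 4) (by norm_num) (by norm_num))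
  have hlim := tendsto_mul_add_rpow 1 0 ((hminor.add hdominant).congr fun n ↦ (add_mul _ _ _).symm)
  have hΓ : Real.Gamma (3 / 4) ≠ 0 := (Real.Gamma_pos_of_pos (by norm_num)).ne'
  have htwo : (2 : ℝ) ^ (1 / 4 : ℝ) * 2 ^ (3 / 4 : ℝ) = 2 := by
    rw [← Real.rpow_add two_pos]
    norm_num
  have hone : (0 + (2 : ℝ) ^ (3 / 4 : ℝ) / Real.Gamma (3 / 4)) *
      (2 ^ (1 / 4 : ℝ) * Real.Gamma (3 / 4) / 2) = 1 := by
    field_simp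
    linear_combination htwo
  refine (hone ▸ hlim.mul_const _).congr fun n ↦ ?_
  rw [slitTotal_diagSteps, Real.rpow_neg n.cast_nonneg, add_zero,
    show (1 - 3 / 4 : ℝ) = 1 / 4 by norm_num]
  field_simp
end
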